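/- Assume the cocycle f is convolution invertible. For each h ∈ H the maps θ^h_r : M⊗Ā^r → M⊗Ā^r, θ^h_r(m⊗𝐚) = (1#h^{(3)}) m (1#h^{(1)})^{-1} ⊗ 𝐚^{h^{(2)}}, form an endomorphism θ^h_* of the normalized Hochschild chain complex (M⊗Ā^*, b_*). For all h, l ∈ H and all n, the endomorphisms of the Hochschild homology H_n(A,M) induced by θ^h_* ∘ θ^l_* and by θ^{hl}_* coincide, and θ^1_* induces the identity; consequently H_*(A,M) carries a natural structure of left H-module. -/

import Mathlib

open TensorProduct

noncomputable section

namespace HopfCrossed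

variable (k : Type) [CommRing k]

def TpowCat (V : ModuleCat k) : ℕ → ModuleCat k
  | 0 => ModuleCat.of k k
  | n + 1 => ModuleCat.of k (V ⊗[k] (TpowCat V n))

abbrev Tpow (V : Type) [AddCommGroup V] [Module k V] (n : ℕ) : Type :=
  TpowCat k (ModuleCat.of k V) n

def tp {V : Type} [AddCommGroup V] [Module k V] : ∀ {n : ℕ}, (Fin n → V) → Tpow k V n
  | 0, _ => (1 : k)
  | _ + 1, v => (v 0) ⊗ₜ[k] (tp fun i => v i.succ)

section Coalg
variable {H : Type} [AddCommGroup H] [Module k H]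

def itComul [Coalgebra k H] : ∀ n : ℕ, H →ₗ[k] Tpow k H (n + 1)
  | 0 => (TensorProduct.rid k H).symm.toLinearMap
  | n + 1 =>
      (TensorProduct.map LinearMap.id (itComul n)) ∘ₗ (Coalgebra.comul (R := k))

def SRep [Coalgebra k H] (n : ℕ) (h : H) (N : ℕ) (u : Fin N → Fin (n + 1) → H) : Prop :=
  itComul k n h = ∑ i, tp k (u i)

def iterAct {A : Type} [AddCommGroup A] [Module k A]
    (act : H →ₗ[k] A →ₗ[k] A) : ∀ {s : ℕ}, (Fin s → H) → A → A
  | 0, _, a => a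
  | _ + 1, h, a => act (h 0) (iterAct act (fun i => h i.succ) a)

end Coalg

/-- A weak action of a Hopf algebra `H` on a `k`-algebra `A` (Blattner–Cohen–Montgomery,
Doi–Takeuchi), written `act h a = a^h`. -/
structure WeakAction (k A H : Type) [CommRing k] [Ring A] [Algebra k A] [Ring H] [HopfAlgebra k H] : Type where
  act : H →ₗ[k] A →ₗ[k] A
  act_mul : ∀ (h : H) (a b : A) (N : ℕ) (u : Fin N → Fin 2 → H), SRep k 1 h N u →
    act h (a * b) = ∑ i, act (u i 0) a * act (u i 1) b
  act_one : ∀ h : H, act h 1 = Coalgebra.counit (R := k) h • (1 : A)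
  one_act : ∀ a : A, act 1 a = a

variable {A H : Type} [Ring A] [Algebra k A] [Ring H] [HopfAlgebra k H]
variable {k}

/-- Normality of the cocycle `f`. -/
def IsNormal (f : H →ₗ[k] H →ₗ[k] A) : Prop :=
  ∀ h : H, f h 1 = Coalgebra.counit (R := k) h • (1 : A) ∧
    f 1 h = Coalgebra.counit (R := k) h • (1 : A)

/-- The cocycle condition
`f(l⁽¹⁾,m⁽¹⁾)^{h⁽¹⁾} f(h⁽²⁾, l⁽²⁾m⁽²⁾) = f(h⁽¹⁾,l⁽¹⁾) f(h⁽²⁾l⁽²⁾, m)`. -/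
def IsCocycle (W : WeakAction k A H) (f : H →ₗ[k] H →ₗ[k] A) : Prop :=
  ∀ (h l m : H) (N₁ N₂ N₃ : ℕ) (u : Fin N₁ → Fin 2 → H) (v : Fin N₂ → Fin 2 → H)
    (w : Fin N₃ → Fin 2 → H),
    SRep k 1 h N₁ u → SRep k 1 l N₂ v → SRep k 1 m N₃ w →
    (∑ i, ∑ j, ∑ p, W.act (u i 0) (f (v j 0) (w p 0)) * f (u i 1) (v j 1 * w p 1)) =
      ∑ i, ∑ j, f (u i 0) (v j 0) * f (u i 1 * v j 1) m

/-- The twisted module condition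
`(a^{l⁽¹⁾})^{h⁽¹⁾} f(h⁽²⁾,l⁽²⁾) = f(h⁽¹⁾,l⁽¹⁾) a^{h⁽²⁾l⁽²⁾}`. -/
def IsTwistedModule (W : WeakAction k A H) (f : H →ₗ[k] H →ₗ[k] A) : Prop :=
  ∀ (h l : H) (a : A) (N₁ N₂ : ℕ) (u : Fin N₁ → Fin 2 → H) (v : Fin N₂ → Fin 2 → H),
    SRep k 1 h N₁ u → SRep k 1 l N₂ v →
    (∑ i, ∑ j, W.act (u i 0) (W.act (v j 0) a) * f (u i 1) (v j 1)) =
      ∑ i, ∑ j, f (u i 0) (v j 0) * W.act (u i 1 * v j 1) a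

variable (k A H) in
/-- A crossed product `E = A #_f H` of `A` by `H`:  a ring `E` identified with `A ⊗ H`
as a `k`-module, whose multiplication is given by the crossed product formula
`(a # h)(b # l) = a b^{h⁽¹⁾} f(h⁽²⁾,l⁽¹⁾) # h⁽³⁾ l⁽²⁾`. -/
structure CrossedProduct (E : Type) [Ring E] [Algebra k E] extends WeakAction k A H where
  f : H →ₗ[k] H →ₗ[k] A
  ι : (A ⊗[k] H) ≃ₗ[k] E
  ι_one : ι (1 ⊗ₜ[k] 1) = 1
  ι_mul : ∀ (a b : A) (h l : H) (N M : ℕ) (u : Fin N → Fin 3 → H) (v : Fin M → Fin 2 → H),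
    SRep k 2 h N u → SRep k 1 l M v →
    ι (a ⊗ₜ[k] h) * ι (b ⊗ₜ[k] l) =
      ∑ i, ∑ j, ι ((a * act (u i 0) b * f (u i 1) (v j 0)) ⊗ₜ[k] (u i 2 * v j 1))
  f_normal : IsNormal f
  f_cocycle : IsCocycle toWeakAction f
  f_twisted : IsTwistedModule toWeakAction f

namespace CrossedProduct

variable {E : Type} [Ring E] [Algebra k E] (S : CrossedProduct k A H E)

/-- The canonical map `A → E`, `a ↦ a # 1`. -/
def aE : A →ₗ[k] E := S.ι.toLinearMap ∘ₗ (TensorProduct.mk k A H).flip 1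

/-- The canonical map `H → E`, `h ↦ 1 # h`. -/
def hE : H →ₗ[k] E := S.ι.toLinearMap ∘ₗ (TensorProduct.mk k A H) 1

end CrossedProduct


section Hochschild

variable (k) in
/-- For a `k`-algebra `B`, the submodule `k·1 ⊆ B`. -/
abbrev unitSub (B : Type) [Ring B] [Algebra k B] : Submodule k B :=
  LinearMap.range (Algebra.linearMap k B)

variable (k) in
/-- `B̄ = B/k`. -/
abbrev Qbar (B : Type) [Ring B] [Algebra k B] : Type := B ⧸ unitSub k B

variable (k) in
/-- The canonical projection `B → B̄`. -/
abbrev qbar (B : Type) [Ring B] [Algebra k B] : B →ₗ[k] Qbar k B :=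
  (unitSub k B).mkQ

/-- A `B`-bimodule structure (with commuting `k`-linear left and right actions)
on a `k`-module `M`. -/
structure Bimod (k B M : Type) [CommRing k] [Ring B] [Algebra k B]
    [AddCommGroup M] [Module k M] : Type where
  l : B →ₗ[k] M →ₗ[k] M
  r : B →ₗ[k] M →ₗ[k] M
  l_one : l 1 = LinearMap.id
  r_one : r 1 = LinearMap.id
  l_mul : ∀ x y : B, l (x * y) = l x ∘ₗ l y
  r_mul : ∀ x y : B, r (x * y) = r y ∘ₗ r x
  lr_comm : ∀ x y : B, l x ∘ₗ r y = r y ∘ₗ l x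

/-- Replace the `r`-tuple `a` by the `(r-1)`-tuple obtained by multiplying the
`i`-th and `(i+1)`-st entries. -/
def mulAt {A : Type} [Mul A] {r : ℕ} (a : Fin (r + 1) → A) (i : Fin r) (j : Fin r) : A :=
  if (j : ℕ) < (i : ℕ) then a j.castSucc
  else if (j : ℕ) = (i : ℕ) then a j.castSucc * a j.succ else a j.succ

variable (k) in
/-- The degree-`n` part `M ⊗ B̄^{⊗n}` of the normalized Hochschild chain complex. -/
abbrev HCh (B M : Type) [Ring B] [Algebra k B] [AddCommGroup M] [Module k M]
    (n : ℕ) : Type :=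
  M ⊗[k] Tpow k (Qbar k B) n

variable (k) in
/-- `IsHochschildD l r bd` says that `bd` is the differential of the normalized
Hochschild chain complex of `B` with coefficients in the bimodule `M` (with left
action `l` and right action `r`):
`b(m ⊗ x₁ ⊗ ⋯ ⊗ xₙ) = m x₁ ⊗ x₂ ⊗ ⋯ + ∑ (-1)^i m ⊗ ⋯ ⊗ xᵢxᵢ₊₁ ⊗ ⋯ + (-1)^n xₙ m ⊗ x₁ ⊗ ⋯ ⊗ xₙ₋₁`. -/
def IsHochschildD {B M : Type} [Ring B] [Algebra k B] [AddCommGroup M] [Module k M]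
    (l r : B →ₗ[k] M →ₗ[k] M)
    (bd : ∀ n : ℕ, HCh k B M (n + 1) →ₗ[k] HCh k B M n) : Prop :=
  ∀ (n : ℕ) (m : M) (x : Fin (n + 1) → B),
    bd n (m ⊗ₜ[k] tp k (fun i => qbar k B (x i))) =
      r (x 0) m ⊗ₜ[k] tp k (fun i : Fin n => qbar k B (x i.succ))
      + (∑ i : Fin n, ((-1 : ℤ) ^ ((i : ℕ) + 1)) •
          (m ⊗ₜ[k] tp k (fun j => qbar k B (mulAt x i j))))
      + ((-1 : ℤ) ^ (n + 1)) •
          (l (x (Fin.last n)) m ⊗ₜ[k] tp k (fun i : Fin n => qbar k B (x i.castSucc)))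

variable (k) in
/-- The homology of a (not necessarily everywhere-defined) chain complex
`⋯ → C (n+1) → C n → ⋯ → C 0`; in degree `n+1` it is `ker (d n) / im (d (n+1))`, and in
degree `0` it is `C 0 / im (d 0)`. -/
def Hml {C : ℕ → Type} [∀ n, AddCommGroup (C n)] [∀ n, Module k (C n)]
    (d : ∀ n : ℕ, C (n + 1) →ₗ[k] C n) : ℕ → Type
  | 0 => C 0 ⧸ LinearMap.range (d 0)
  | n + 1 => LinearMap.ker (d n) ⧸
      (LinearMap.range (d (n + 1))).comap (LinearMap.ker (d n)).subtype

instance {C : ℕ → Type} [∀ n, AddCommGroup (C n)] [∀ n, Module k (C n)]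
    (d : ∀ n : ℕ, C (n + 1) →ₗ[k] C n) : ∀ n, AddCommGroup (Hml k d n)
  | 0 => inferInstanceAs (AddCommGroup (C 0 ⧸ LinearMap.range (d 0)))
  | n + 1 => inferInstanceAs (AddCommGroup (LinearMap.ker (d n) ⧸
      (LinearMap.range (d (n + 1))).comap (LinearMap.ker (d n)).subtype))

instance {C : ℕ → Type} [∀ n, AddCommGroup (C n)] [∀ n, Module k (C n)]
    (d : ∀ n : ℕ, C (n + 1) →ₗ[k] C n) : ∀ n, Module k (Hml k d n)
  | 0 => inferInstanceAs (Module k (C 0 ⧸ LinearMap.range (d 0)))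
  | n + 1 => inferInstanceAs (Module k (LinearMap.ker (d n) ⧸
      (LinearMap.range (d (n + 1))).comap (LinearMap.ker (d n)).subtype))

end Hochschild

section Statement10

variable {k A H E M : Type} [CommRing k] [Ring A] [Algebra k A] [Ring H] [HopfAlgebra k H]
  [Ring E] [Algebra k E] [AddCommGroup M] [Module k M]

/-- `IsConvInverse f g` : `g` is the convolution inverse of `f` in `Hom_k(H ⊗ H, A)`. -/
def IsConvInverse (f g : H →ₗ[k] H →ₗ[k] A) : Prop :=
  ∀ (h l : H) (N M' : ℕ) (u : Fin N → Fin 2 → H) (v : Fin M' → Fin 2 → H),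
    SRep k 1 h N u → SRep k 1 l M' v →
    (∑ i, ∑ j, f (u i 0) (v j 0) * g (u i 1) (v j 1)) =
        (Coalgebra.counit (R := k) h * Coalgebra.counit (R := k) l) • (1 : A) ∧
    (∑ i, ∑ j, g (u i 0) (v j 0) * f (u i 1) (v j 1)) =
        (Coalgebra.counit (R := k) h * Coalgebra.counit (R := k) l) • (1 : A)

/-- `IsTheta S Bi finv θ` : for each `h ∈ H`, `θ h` is the family of maps
`θ^h_r : M ⊗ Ā^r → M ⊗ Ā^r` given by
`θ^h_r(m ⊗ 𝐚) = (1 # h⁽³⁾) m (1 # h⁽¹⁾)⁻¹ ⊗ 𝐚^{h⁽²⁾}`, where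
`(1 # x)⁻¹ = f⁻¹(S(x⁽²⁾), x⁽³⁾) # S(x⁽¹⁾)` and `h⁽²⁾` acts componentwise on `𝐚`. -/
def IsTheta (S : CrossedProduct k A H E) (Bi : Bimod k E M)
    (finv : H →ₗ[k] H →ₗ[k] A)
    (θ : H → ∀ r : ℕ, HCh k A M r →ₗ[k] HCh k A M r) : Prop :=
  ∀ (h : H) (r : ℕ) (m : M) (a : Fin r → A) (N : ℕ) (u : Fin N → Fin (r + 4) → H),
    SRep k (r + 3) h N u →
    θ h r (m ⊗ₜ[k] tp k (fun j => qbar k A (a j))) =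
      ∑ i, (Bi.l (S.hE (u i (Fin.last (r + 3))))
          (Bi.r (S.ι ((finv (HopfAlgebra.antipode (R := k) (u i 1)) (u i 2)) ⊗ₜ[k]
            HopfAlgebra.antipode (R := k) (u i 0))) m)) ⊗ₜ[k]
        tp k (fun j : Fin r => qbar k A (S.act (u i ⟨(j : ℕ) + 3, by omega⟩) (a j)))

section Basics
open WithConv

variable {k : Type} [CommRing k]

def consE (V : Type) [AddCommGroup V] [Module k V] (n : ℕ) :
    V ⊗[k] Tpow k V n ≃ₗ[k] Tpow k V (n + 1) := LinearEquiv.refl k (V ⊗[k] Tpow k V n)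

def zeroE (V : Type) [AddCommGroup V] [Module k V] : k ≃ₗ[k] Tpow k V 0 := LinearEquiv.refl k k

section
variable {V : Type} [AddCommGroup V] [Module k V]

lemma tp_zero (v : Fin 0 → V) : tp k v = zeroE V 1 := rfl
lemma tp_succ {n : ℕ} (v : Fin (n + 1) → V) :
    tp k v = consE V n (v 0 ⊗ₜ[k] tp k (fun i => v i.succ)) := rfl

lemma Tpow_hom_ext0 {X : Type} [AddCommGroup X] [Module k X] {f g : Tpow k V 0 →ₗ[k] X}
    (h : f (zeroE V 1) = g (zeroE V 1)) : f = g := by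
  have : f ∘ₗ (zeroE V).toLinearMap = g ∘ₗ (zeroE V).toLinearMap := by
    ext; simpa using h
  refine LinearMap.ext fun x => ?_
  obtain ⟨y, rfl⟩ := (zeroE (k := k) V).surjective x
  exact LinearMap.congr_fun this y

lemma Tpow_hom_ext_succ {X : Type} [AddCommGroup X] [Module k X] {n : ℕ}
    {f g : Tpow k V (n + 1) →ₗ[k] X}
    (h : ∀ v w, f (consE V n (v ⊗ₜ w)) = g (consE V n (v ⊗ₜ w))) : f = g := by
  have : f ∘ₗ (consE V n).toLinearMap = g ∘ₗ (consE V n).toLinearMap := by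
    apply TensorProduct.ext'
    intro v w; simpa using h v w
  refine LinearMap.ext fun x => ?_
  obtain ⟨y, rfl⟩ := (consE (k := k) V n).surjective x
  exact LinearMap.congr_fun this y

/-- linear maps from a tensor power are determined on pure tensors of lifts -/
lemma Tpow_hom_ext {V' : Type} (q : V' → V) (hq : Function.Surjective q) {n : ℕ} :
    ∀ {X : Type} [AddCommGroup X] [Module k X]
    {f g : Tpow k V n →ₗ[k] X}
    (_ : ∀ a : Fin n → V', f (tp k (fun i => q (a i))) = g (tp k (fun i => q (a i)))), f = g := by
  induction n with
  | zero =>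
    intro X _ _ f g h
    exact Tpow_hom_ext0 (h Fin.elim0)
  | succ n ih =>
    intro X _ _ f g h
    apply Tpow_hom_ext_succ
    intro v w
    obtain ⟨v, rfl⟩ := hq v
    have := ih (f := f ∘ₗ (consE V n).toLinearMap ∘ₗ TensorProduct.mk k V _ (q v))
      (g := g ∘ₗ (consE V n).toLinearMap ∘ₗ TensorProduct.mk k V _ (q v)) (by
        intro a
        have := h (Fin.cons v a)
        simpa [tp_succ] using this)
    exact LinearMap.congr_fun this w

lemma tp_mem_closure {n : ℕ} : ∀ (x : Tpow k V (n + 1)),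
    x ∈ AddSubmonoid.closure (Set.range (fun u : Fin (n + 1) → V => tp k u)) := by
  induction n with
  | zero =>
    intro x
    obtain ⟨y, rfl⟩ := (consE (k := k) V 0).surjective x
    induction y with
    | zero => simp [zero_mem]
    | add a b ha hb => rw [map_add]; exact add_mem ha hb
    | tmul v w =>
      obtain ⟨c, rfl⟩ := (zeroE (k := k) V).surjective w
      apply AddSubmonoid.subset_closure
      refine ⟨fun _ => c • v, ?_⟩
      simp only [tp_succ, tp_zero]
      rw [TensorProduct.smul_tmul, ← map_smul]
      simp
  | succ n ih =>
    intro x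
    obtain ⟨y, rfl⟩ := (consE (k := k) V (n + 1)).surjective x
    induction y with
    | zero => simp [zero_mem]
    | add a b ha hb => rw [map_add]; exact add_mem ha hb
    | tmul v w =>
      induction ih w using AddSubmonoid.closure_induction with
      | mem x hx =>
        obtain ⟨u, rfl⟩ := hx
        exact AddSubmonoid.subset_closure ⟨Fin.cons v u, by simp [tp_succ]⟩
      | zero => simp [zero_mem]
      | add a b _ _ ha hb => rw [TensorProduct.tmul_add, map_add]; exact add_mem ha hb

lemma exists_tp_rep {n : ℕ} (x : Tpow k V (n + 1)) :
    ∃ (N : ℕ) (u : Fin N → Fin (n + 1) → V), x = ∑ i, tp k (u i) := by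
  induction tp_mem_closure x using AddSubmonoid.closure_induction with
  | mem x hx => obtain ⟨u, rfl⟩ := hx; exact ⟨1, fun _ => u, by simp⟩
  | zero => exact ⟨0, Fin.elim0, by simp⟩
  | add x y _ _ hx hy =>
    obtain ⟨N, u, rfl⟩ := hx
    obtain ⟨N', u', rfl⟩ := hy
    exact ⟨N + N', Fin.append u u', by simp [Fin.sum_univ_add]⟩

end
end Basics

section Conv
open WithConv

variable {k : Type} [CommRing k]
variable {C : Type} [AddCommGroup C] [Module k C] [Coalgebra k C]
variable {B B' : Type} [Ring B] [Algebra k B] [Ring B'] [Algebra k B']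

lemma itComul_zero (c : C) : itComul k 0 c = consE C 0 (c ⊗ₜ zeroE C 1) := rfl
lemma itComul_succ (n : ℕ) (c : C) : itComul k (n + 1) c =
    consE C (n + 1) (TensorProduct.map LinearMap.id (itComul k n) (Coalgebra.comul (R := k) c)) := rfl

/-- the isomorphism `C^{⊗2} ≅ C ⊗ C`. -/
def two (C : Type) [AddCommGroup C] [Module k C] : Tpow k C 2 ≃ₗ[k] C ⊗[k] C :=
  (consE C 1).symm ≪≫ₗ TensorProduct.congr (LinearEquiv.refl k C)
    ((consE C 0).symm ≪≫ₗ TensorProduct.congr (LinearEquiv.refl k C) (zeroE C).symm ≪≫ₗ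
      TensorProduct.rid k C)

lemma two_tp (u : Fin 2 → C) : two (k := k) C (tp k u) = u 0 ⊗ₜ u 1 := by
  simp [two, tp_succ, tp_zero]

lemma two_itComul (c : C) : two C (itComul k 1 c) = Coalgebra.comul (R := k) c := by
  rw [itComul_succ]
  simp only [two, LinearEquiv.trans_apply, LinearEquiv.symm_apply_apply]
  generalize Coalgebra.comul (R := k) c = z
  induction z with
  | zero => simp
  | add a b ha hb => simp only [map_add, ha, hb]
  | tmul a b => simp [itComul_zero]

def three (C : Type) [AddCommGroup C] [Module k C] : Tpow k C 3 ≃ₗ[k] C ⊗[k] (C ⊗[k] C) :=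
  (consE C 2).symm ≪≫ₗ TensorProduct.congr (LinearEquiv.refl k C) (two C)

lemma three_tp (u : Fin 3 → C) : three (k := k) C (tp k u) = u 0 ⊗ₜ (u 1 ⊗ₜ u 2) := by
  rw [tp_succ]
  simp [three, two_tp]

lemma three_itComul (c : C) : three C (itComul k 2 c) =
    TensorProduct.map LinearMap.id (Coalgebra.comul (R := k)) (Coalgebra.comul (R := k) c) := by
  rw [itComul_succ]
  simp only [three, LinearEquiv.trans_apply, LinearEquiv.symm_apply_apply]
  generalize Coalgebra.comul (R := k) c = z
  induction z with
  | zero => simp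
  | add a b ha hb => simp only [map_add, ha, hb]
  | tmul a b => simp [two_itComul]

lemma SRep_one_iff (c : C) (N : ℕ) (u : Fin N → Fin 2 → C) :
    SRep k 1 c N u ↔ Coalgebra.comul (R := k) c = ∑ i, u i 0 ⊗ₜ u i 1 := by
  unfold SRep
  rw [← (two (k := k) C).injective.eq_iff, two_itComul, map_sum]
  simp only [two_tp]

lemma SRep_two_iff (c : C) (N : ℕ) (u : Fin N → Fin 3 → C) :
    SRep k 2 c N u ↔ TensorProduct.map LinearMap.id (Coalgebra.comul (R := k))
      (Coalgebra.comul (R := k) c) = ∑ i, u i 0 ⊗ₜ (u i 1 ⊗ₜ u i 2) := by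
  unfold SRep
  rw [← (three (k := k) C).injective.eq_iff, three_itComul, map_sum]
  simp only [three_tp]

lemma exists_SRep (n : ℕ) (c : C) : ∃ N u, SRep k n c N u := exists_tp_rep _

lemma SRep.conv_apply {c : C} {N : ℕ} {u : Fin N → Fin 2 → C} (hu : SRep k 1 c N u)
    (F G : WithConv (C →ₗ[k] B)) : (F * G) c = ∑ i, F (u i 0) * G (u i 1) := by
  rw [SRep_one_iff] at hu
  simp [hu]

lemma conv_apply_rep {c : C} {N : ℕ} {u : Fin N → Fin 2 → C}
    (hu : Coalgebra.comul (R := k) c = ∑ i, u i 0 ⊗ₜ u i 1)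
    (F G : WithConv (C →ₗ[k] B)) : (F * G) c = ∑ i, F (u i 0) * G (u i 1) := by
  simp [hu]

/-- constants in the convolution algebra -/
def Kc (C : Type) [AddCommGroup C] [Module k C] [Coalgebra k C] (b : B) : WithConv (C →ₗ[k] B) :=
  toConv ((Coalgebra.counit (R := k) (A := C)).smulRight b)

@[simp] lemma Kc_apply (b : B) (c : C) : Kc (k := k) C b c = Coalgebra.counit (R := k) c • b := rfl

lemma Kc_mul_apply (b : B) (F : WithConv (C →ₗ[k] B)) (c : C) : (Kc (k := k) C b * F) c = b * F c := by
  obtain ⟨N, u, hu⟩ := exists_SRep (k := k) 1 c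
  rw [hu.conv_apply]
  rw [SRep_one_iff] at hu
  have := congrArg (fun z => TensorProduct.lid k C (LinearMap.rTensor C (Coalgebra.counit (R := k)) z)) hu
  simp only [Coalgebra.rTensor_counit_comul, map_sum, LinearMap.rTensor_tmul, TensorProduct.lid_tmul, one_smul] at this
  conv_rhs => rw [this]
  simp [Finset.mul_sum]

lemma mul_Kc_apply (b : B) (F : WithConv (C →ₗ[k] B)) (c : C) : (F * Kc (k := k) C b) c = F c * b := by
  obtain ⟨N, u, hu⟩ := exists_SRep (k := k) 1 c
  rw [hu.conv_apply]
  rw [SRep_one_iff] at hu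
  have := congrArg (fun z => TensorProduct.rid k C (LinearMap.lTensor C (Coalgebra.counit (R := k)) z)) hu
  simp only [Coalgebra.lTensor_counit_comul, map_sum, LinearMap.lTensor_tmul, TensorProduct.rid_tmul, one_smul] at this
  conv_rhs => rw [this]
  simp [Finset.sum_mul]

lemma conv_ext {F G : WithConv (C →ₗ[k] B)} (h : ∀ c, F c = G c) : F = G :=
  WithConv.ext (LinearMap.ext h)

/-- post-composition with an algebra map. -/
def pc (C : Type) [AddCommGroup C] [Module k C] [Coalgebra k C] (φ : B →ₐ[k] B') :
    WithConv (C →ₗ[k] B) →+* WithConv (C →ₗ[k] B') where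
  toFun F := toConv (φ.toLinearMap ∘ₗ F.ofConv)
  map_one' := conv_ext fun c => by simp
  map_mul' F G := by
    apply conv_ext; intro c
    obtain ⟨N, u, hu⟩ := exists_SRep (k := k) 1 c
    rw [hu.conv_apply]
    simp only [LinearMap.comp_apply, hu.conv_apply]
    simp
  map_zero' := conv_ext fun c => by simp
  map_add' F G := conv_ext fun c => by simp

@[simp] lemma pc_apply (φ : B →ₐ[k] B') (F : WithConv (C →ₗ[k] B)) (c : C) :
    pc C φ F c = φ (F c) := rfl

@[simp] lemma pc_Kc (φ : B →ₐ[k] B') (b : B) : pc C φ (Kc C b) = Kc C (φ b) :=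
  conv_ext fun c => by simp

/-- pre-composition with a coalgebra map. -/
def prc {D : Type} [AddCommGroup D] [Module k D] [Coalgebra k D] (φ : D →ₗc[k] C) :
    WithConv (C →ₗ[k] B) →+* WithConv (D →ₗ[k] B) where
  toFun F := toConv (F.ofConv ∘ₗ φ.toLinearMap)
  map_one' := conv_ext fun c => by simp
  map_mul' F G := by
    rw [LinearMap.convMul_comp_coalgHom_distrib]
  map_zero' := conv_ext fun c => by simp
  map_add' F G := conv_ext fun c => by simp

@[simp] lemma prc_apply {D : Type} [AddCommGroup D] [Module k D] [Coalgebra k D] (φ : D →ₗc[k] C)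
   (F : WithConv (C →ₗ[k] B)) (c : D) :
    prc φ F c = F (φ c) := rfl

lemma prc_Kc {D : Type} [AddCommGroup D] [Module k D] [Coalgebra k D] (φ : D →ₗc[k] C)
   (b : B) : prc φ (Kc C b) = Kc (k := k) D b :=
  conv_ext fun c => by simp

end Conv

section Cross
open WithConv

variable {k A H E : Type} [CommRing k] [Ring A] [Algebra k A] [Ring H] [HopfAlgebra k H]
  [Ring E] [Algebra k E]

lemma contr_mid {X : Type} [AddCommGroup X] [Module k X] (g : H →ₗ[k] H →ₗ[k] X) {h : H}
    {N N' : ℕ} {u : Fin N → Fin 3 → H} {v : Fin N' → Fin 2 → H}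
    (hu : SRep k 2 h N u) (hv : SRep k 1 h N' v) :
    ∑ i, Coalgebra.counit (R := k) (u i 1) • g (u i 0) (u i 2) = ∑ i, g (v i 0) (v i 1) := by
  rw [SRep_two_iff] at hu
  rw [SRep_one_iff] at hv
  have key : (TensorProduct.lift g ∘ₗ TensorProduct.map LinearMap.id
      ((TensorProduct.lid k H).toLinearMap ∘ₗ LinearMap.rTensor H (Coalgebra.counit (R := k))))
      (TensorProduct.map LinearMap.id (Coalgebra.comul (R := k)) (Coalgebra.comul (R := k) h)) =
      TensorProduct.lift g (Coalgebra.comul (R := k) h) := by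
    rw [hv]; simp
  rw [hu, hv] at key
  simpa using key

lemma contr_left {X : Type} [AddCommGroup X] [Module k X] (g : H →ₗ[k] H →ₗ[k] X) {h : H}
    {N N' : ℕ} {u : Fin N → Fin 3 → H} {v : Fin N' → Fin 2 → H}
    (hu : SRep k 2 h N u) (hv : SRep k 1 h N' v) :
    ∑ i, Coalgebra.counit (R := k) (u i 0) • g (u i 1) (u i 2) = ∑ i, g (v i 0) (v i 1) := by
  rw [SRep_two_iff] at hu
  rw [SRep_one_iff] at hv
  have key : ((TensorProduct.lift g) ∘ₗ (TensorProduct.lid k (H ⊗[k] H)).toLinearMap ∘ₗ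
       LinearMap.rTensor (H ⊗[k] H) (Coalgebra.counit (R := k)))
      (TensorProduct.map LinearMap.id (Coalgebra.comul (R := k)) (Coalgebra.comul (R := k) h)) =
      TensorProduct.lift g (Coalgebra.comul (R := k) h) := by
    have e : ((TensorProduct.lid k (H ⊗[k] H)).toLinearMap ∘ₗ
       LinearMap.rTensor (H ⊗[k] H) (Coalgebra.counit (R := k))) ∘ₗ
      (TensorProduct.map (LinearMap.id : H →ₗ[k] H) (Coalgebra.comul (R := k) (A := H))) =
      Coalgebra.comul (R := k) ∘ₗ (TensorProduct.lid k H).toLinearMap ∘ₗ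
        LinearMap.rTensor H (Coalgebra.counit (R := k)) := by
      apply TensorProduct.ext'; intro x y; simp
    have e' := LinearMap.congr_fun e (Coalgebra.comul (R := k) h)
    simp only [LinearMap.comp_apply, Coalgebra.rTensor_counit_comul] at e' ⊢
    rw [e']; simp
  rw [hu, hv] at key
  simpa using key

lemma sum_counit_left {h : H} {N : ℕ} {v : Fin N → Fin 2 → H} (hv : SRep k 1 h N v) :
    ∑ i, Coalgebra.counit (R := k) (v i 0) • v i 1 = h := by
  rw [SRep_one_iff] at hv
  have := congrArg (fun z => TensorProduct.lid k H (LinearMap.rTensor H (Coalgebra.counit (R := k)) z)) hv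
  simp only [Coalgebra.rTensor_counit_comul, map_sum, LinearMap.rTensor_tmul, TensorProduct.lid_tmul, one_smul] at this
  exact this.symm

lemma sum_counit_right {h : H} {N : ℕ} {v : Fin N → Fin 2 → H} (hv : SRep k 1 h N v) :
    ∑ i, Coalgebra.counit (R := k) (v i 1) • v i 0 = h := by
  rw [SRep_one_iff] at hv
  have := congrArg (fun z => TensorProduct.rid k H (LinearMap.lTensor H (Coalgebra.counit (R := k)) z)) hv
  simp only [Coalgebra.lTensor_counit_comul, map_sum, LinearMap.lTensor_tmul, TensorProduct.rid_tmul, one_smul] at this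
  exact this.symm

lemma SRep_one_one : SRep k 1 (1 : H) 1 (fun _ _ => 1) := by
  rw [SRep_one_iff]; simp [Algebra.TensorProduct.one_def]
lemma SRep_two_one : SRep k 2 (1 : H) 1 (fun _ _ => 1) := by
  rw [SRep_two_iff]; simp [Algebra.TensorProduct.one_def]

lemma conv_tmul_apply {B : Type} [Ring B] [Algebra k B] {h l : H} {N N' : ℕ}
    {u : Fin N → Fin 2 → H} {v : Fin N' → Fin 2 → H}
    (hu : SRep k 1 h N u) (hv : SRep k 1 l N' v) (F G : WithConv (H ⊗[k] H →ₗ[k] B)) :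
    (F * G) (h ⊗ₜ l) = ∑ i, ∑ j, F (u i 0 ⊗ₜ v j 0) * G (u i 1 ⊗ₜ v j 1) := by
  rw [SRep_one_iff] at hu hv
  simp [TensorProduct.comul_tmul, hu, hv, TensorProduct.sum_tmul, TensorProduct.tmul_sum]
  exact Finset.sum_comm

lemma conv2_ext {B : Type} [Ring B] [Algebra k B] {F G : WithConv (H ⊗[k] H →ₗ[k] B)}
    (h : ∀ x y, F (x ⊗ₜ y) = G (x ⊗ₜ y)) : F = G :=
  WithConv.ext (TensorProduct.ext' h)

variable (S : CrossedProduct k A H E)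

lemma hE_apply (h : H) : S.hE h = S.ι (1 ⊗ₜ h) := rfl
lemma aE_apply (a : A) : S.aE a = S.ι (a ⊗ₜ 1) := rfl

lemma aE_mul_ι (a b : A) (h : H) : S.aE a * S.ι (b ⊗ₜ h) = S.ι ((a * b) ⊗ₜ h) := by
  obtain ⟨N, v, hv⟩ := exists_SRep (k := k) 1 h
  rw [aE_apply, S.ι_mul a b 1 h 1 N _ v SRep_two_one hv]
  simp only [Finset.univ_unique, Finset.sum_const, Finset.card_singleton, one_smul, S.one_act,
    (S.f_normal _).2, one_mul, mul_smul_comm, mul_one, TensorProduct.smul_tmul]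
  rw [← map_sum, ← TensorProduct.tmul_sum, sum_counit_left hv]

def aEh : A →ₐ[k] E := AlgHom.ofLinearMap S.aE S.ι_one (fun a b => by
  rw [aE_apply S b, aE_mul_ι]; rfl)

lemma aEh_apply (a : A) : aEh S a = S.aE a := rfl

lemma ι_eq (a : A) (h : H) : S.ι (a ⊗ₜ h) = aEh S a * S.hE h := by
  rw [hE_apply, aEh_apply, aE_mul_ι, mul_one]

lemma hE_one : S.hE 1 = 1 := S.ι_one

def gam : WithConv (H →ₗ[k] E) := toConv S.hE
def ActA (a : A) : WithConv (H →ₗ[k] A) := toConv (S.act.flip a)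
def fC (f : H →ₗ[k] H →ₗ[k] A) : WithConv (H ⊗[k] H →ₗ[k] A) := toConv (TensorProduct.lift f)
def rhoA (a : A) : WithConv (H ⊗[k] H →ₗ[k] A) :=
  toConv (TensorProduct.lift (LinearMap.compl₂ S.act (S.act.flip a)))
def sigA (a : A) : WithConv (H ⊗[k] H →ₗ[k] A) := prc (Bialgebra.mulCoalgHom k H) (ActA S a)
def gg : WithConv (H ⊗[k] H →ₗ[k] E) :=
  toConv (TensorProduct.lift (LinearMap.compl₁₂ (LinearMap.mul k E) S.hE S.hE))
def gp : WithConv (H ⊗[k] H →ₗ[k] E) := prc (Bialgebra.mulCoalgHom k H) (gam S)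

@[simp] lemma gam_apply (h : H) : gam S h = S.hE h := rfl
@[simp] lemma ActA_apply (a : A) (h : H) : ActA S a h = S.act h a := rfl
@[simp] lemma fC_apply (f : H →ₗ[k] H →ₗ[k] A) (h l : H) : fC f (h ⊗ₜ l) = f h l := rfl
@[simp] lemma rhoA_apply (a : A) (h l : H) : rhoA S a (h ⊗ₜ l) = S.act h (S.act l a) := rfl
@[simp] lemma sigA_apply (a : A) (h l : H) : sigA S a (h ⊗ₜ l) = S.act (h * l) a := rfl
@[simp] lemma gg_apply (h l : H) : gg S (h ⊗ₜ l) = S.hE h * S.hE l := rfl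
@[simp] lemma gp_apply (h l : H) : gp S (h ⊗ₜ l) = S.hE (h * l) := rfl

lemma ActA_mul (a b : A) : ActA S (a * b) = ActA S a * ActA S b := by
  apply conv_ext; intro h
  obtain ⟨N, v, hv⟩ := exists_SRep (k := k) 1 h
  rw [hv.conv_apply]; exact S.act_mul _ _ _ _ _ hv

lemma ActA_one : ActA S 1 = 1 := by
  apply conv_ext; intro h
  simp [S.act_one, Algebra.algebraMap_eq_smul_one]

lemma sigA_mul (a b : A) : sigA S (a * b) = sigA S a * sigA S b := by
  simp [sigA, ActA_mul]
lemma sigA_one : sigA S 1 = 1 := by simp [sigA, ActA_one]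

lemma rhoA_mul (a b : A) : rhoA S (a * b) = rhoA S a * rhoA S b := by
  apply conv2_ext; intro h l
  obtain ⟨N, u, hu⟩ := exists_SRep (k := k) 1 h
  obtain ⟨N', v, hv⟩ := exists_SRep (k := k) 1 l
  rw [conv_tmul_apply hu hv, rhoA_apply, S.act_mul _ _ _ _ _ hv, map_sum, Finset.sum_comm]
  refine Finset.sum_congr rfl fun j _ => ?_
  rw [S.act_mul _ _ _ _ _ hu]; rfl
lemma rhoA_one : rhoA S 1 = 1 := by
  apply conv2_ext; intro h l
  simp [S.act_one, Algebra.algebraMap_eq_smul_one, smul_smul, mul_comm]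

lemma twisted (a : A) : rhoA S a * fC S.f = fC S.f * sigA S a := by
  apply conv2_ext; intro h l
  obtain ⟨N, u, hu⟩ := exists_SRep (k := k) 1 h
  obtain ⟨N', v, hv⟩ := exists_SRep (k := k) 1 l
  rw [conv_tmul_apply hu hv, conv_tmul_apply hu hv]
  exact S.f_twisted _ _ _ _ _ _ _ hu hv

lemma f_mul_finv {finv : H →ₗ[k] H →ₗ[k] A} (hf : IsConvInverse S.f finv) :
    fC S.f * fC finv = 1 := by
  apply conv2_ext; intro h l
  obtain ⟨N, u, hu⟩ := exists_SRep (k := k) 1 h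
  obtain ⟨N', v, hv⟩ := exists_SRep (k := k) 1 l
  rw [conv_tmul_apply hu hv]
  refine (hf _ _ _ _ _ _ hu hv).1.trans ?_
  simp [Algebra.algebraMap_eq_smul_one, smul_smul, mul_comm]
lemma finv_mul_f {finv : H →ₗ[k] H →ₗ[k] A} (hf : IsConvInverse S.f finv) :
    fC finv * fC S.f = 1 := by
  apply conv2_ext; intro h l
  obtain ⟨N, u, hu⟩ := exists_SRep (k := k) 1 h
  obtain ⟨N', v, hv⟩ := exists_SRep (k := k) 1 l
  rw [conv_tmul_apply hu hv]
  refine (hf _ _ _ _ _ _ hu hv).2.trans ?_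
  simp [Algebra.algebraMap_eq_smul_one, smul_smul, mul_comm]

/-- `γ(h) a = a^{h1} γ(h2)`. -/
lemma act_gam (a : A) : pc H (aEh S) (ActA S a) * gam S = gam S * Kc H (aEh S a) := by
  apply conv_ext; intro h
  obtain ⟨N, u, hu⟩ := exists_SRep (k := k) 2 h
  obtain ⟨N', v, hv⟩ := exists_SRep (k := k) 1 h
  rw [mul_Kc_apply, hv.conv_apply, aEh_apply, aE_apply, gam_apply, hE_apply,
    S.ι_mul 1 a h 1 N 1 u _ hu SRep_one_one]
  simp only [Finset.univ_unique, Finset.sum_const, Finset.card_singleton, one_smul, 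
    (S.f_normal _).1, one_mul, mul_smul_comm, mul_one, ← TensorProduct.smul_tmul', map_smul]
  have := contr_mid ((TensorProduct.mk k A H).compr₂ S.ι.toLinearMap ∘ₗ S.act.flip a) hu hv
  refine Eq.trans ?_ this.symm
  simp [ι_eq]

lemma gg_eq : gg S = pc _ (aEh S) (fC S.f) * gp S := by
  apply conv2_ext; intro h l
  obtain ⟨N, u, hu⟩ := exists_SRep (k := k) 2 h
  obtain ⟨N', v, hv⟩ := exists_SRep (k := k) 1 h
  obtain ⟨N'', w, hw⟩ := exists_SRep (k := k) 1 l
  rw [conv_tmul_apply hv hw, gg_apply, hE_apply, hE_apply, S.ι_mul 1 1 h l N N'' u w hu hw,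
    Finset.sum_comm, Finset.sum_comm (s := Finset.univ (α := Fin N'))]
  refine Finset.sum_congr rfl fun j _ => ?_
  have := contr_left ((TensorProduct.mk k A H).compr₂ S.ι.toLinearMap ∘ₗ S.f.flip (w j 0) |>.compl₂ 
    ((LinearMap.mul k H).flip (w j 1))) hu hv
  simp only [S.act_one, one_mul, smul_mul_assoc, ← TensorProduct.smul_tmul', map_smul]
  refine Eq.trans this ?_
  simp [ι_eq]

lemma sig_gp (a : A) : pc _ (aEh S) (sigA S a) * gp S = gp S * Kc _ (aEh S a) := by
  have := congrArg (prc (Bialgebra.mulCoalgHom k H)) (act_gam S a)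
  rw [map_mul, map_mul, prc_Kc] at this
  exact this

end Cross

section Inv
open WithConv

variable {k A H E : Type} [CommRing k] [Ring A] [Algebra k A] [Ring H] [HopfAlgebra k H]
  [Ring E] [Algebra k E]

lemma comul_antipode' (h : H) {N : ℕ} {v : Fin N → Fin 2 → H} (hv : SRep k 1 h N v) :
    Coalgebra.comul (R := k) (HopfAlgebra.antipode k h) =
      ∑ i, HopfAlgebra.antipode k (v i 1) ⊗ₜ[k] HopfAlgebra.antipode k (v i 0) := by
  let j1 : H →ₐ[k] H ⊗[k] H := Algebra.TensorProduct.includeLeft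
  let j2 : H →ₐ[k] H ⊗[k] H := Algebra.TensorProduct.includeRight
  let s : WithConv (H →ₗ[k] H) := toConv (HopfAlgebra.antipode k)
  let d : WithConv (H →ₗ[k] H) := toConv LinearMap.id
  have hsd : s * d = 1 := LinearMap.antipode_mul_id
  have e : toConv (Coalgebra.comul (R := k) (A := H)) = pc H j1 d * pc H j2 d := by
    apply conv_ext; intro h
    obtain ⟨N, v, hv⟩ := exists_SRep (k := k) 1 h
    rw [hv.conv_apply]
    rw [SRep_one_iff] at hv
    simp [hv, j1, j2, d]
  have e1 : (pc H j2 s * pc H j1 s) * toConv (Coalgebra.comul (R := k) (A := H)) = 1 := by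
    rw [e]
    calc _ = pc H j2 s * (pc H j1 s * pc H j1 d) * pc H j2 d := by simp only [mul_assoc]
      _ = 1 := by rw [← map_mul, hsd, map_one, mul_one, ← map_mul, hsd, map_one]
  have := left_inv_eq_right_inv e1 LinearMap.comul_right_inv
  have := DFunLike.congr_fun (congrArg WithConv.ofConv this) h
  refine Eq.trans this.symm ?_
  rw [hv.conv_apply]
  simp [j1, j2, s]

section
variable {C : Type} [AddCommGroup C] [Module k C] [Coalgebra k C]
abbrev D1 : C →ₗ[k] C ⊗[k] C := Coalgebra.comul (R := k)
abbrev D2 : C →ₗ[k] C ⊗[k] (C ⊗[k] C) := TensorProduct.map LinearMap.id D1 ∘ₗ D1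
abbrev D3 : C →ₗ[k] C ⊗[k] (C ⊗[k] (C ⊗[k] C)) := TensorProduct.map LinearMap.id D2 ∘ₗ D1

lemma coassoc' (h : C) : TensorProduct.assoc k C C C (TensorProduct.map D1 LinearMap.id (D1 h)) =
    D2 (k := k) h := Coalgebra.coassoc_apply h

lemma D3_eq (h : C) : D3 (k := k) h =
    TensorProduct.assoc k C C (C ⊗[k] C) (TensorProduct.map D1 D1 (D1 (k := k) h)) := by
  have e1 : ((TensorProduct.assoc k C C (C ⊗[k] C)).toLinearMap ∘ₗ
      TensorProduct.map LinearMap.id D1) =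
    (TensorProduct.map LinearMap.id (TensorProduct.map LinearMap.id (D1 (k := k) (C := C)))) ∘ₗ
      (TensorProduct.assoc k C C C).toLinearMap := by
    ext x y z; simp
  have e2 : (TensorProduct.map D1 D1 (D1 (k := k) h)) =
      TensorProduct.map LinearMap.id D1 (TensorProduct.map D1 LinearMap.id (D1 (k := k) h)) := by
    conv_rhs => rw [← LinearMap.comp_apply, ← TensorProduct.map_comp]
    rfl
  rw [e2]
  have := LinearMap.congr_fun e1 (TensorProduct.map D1 LinearMap.id (D1 (k := k) h))
  simp only [LinearMap.comp_apply, LinearEquiv.coe_coe] at this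
  rw [this, coassoc']
  simp only [LinearMap.comp_apply]
  conv_rhs => rw [← LinearMap.comp_apply, ← TensorProduct.map_comp]
  rfl

/-- middle regrouping -/
lemma D3_eq_mid (h : C) : D3 (k := k) h = TensorProduct.map LinearMap.id
    ((TensorProduct.assoc k C C C).toLinearMap ∘ₗ TensorProduct.map D1 LinearMap.id)
      (D2 (k := k) h) := by
  simp only [LinearMap.comp_apply]
  conv_rhs => rw [← LinearMap.comp_apply, ← TensorProduct.map_comp]
  congr 2
  ext x
  exact (coassoc' x).symm

lemma D3_eq_left (h : C) : D3 (k := k) h = TensorProduct.map LinearMap.id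
    (TensorProduct.assoc k C C C).toLinearMap (TensorProduct.assoc k C (C ⊗[k] C) C
      (TensorProduct.map D2 LinearMap.id (D1 (k := k) h))) := by
  have e1 : ((TensorProduct.assoc k C (C ⊗[k] C) C).toLinearMap ∘ₗ
      TensorProduct.map (TensorProduct.map LinearMap.id D1) LinearMap.id) =
    (TensorProduct.map LinearMap.id (TensorProduct.map (D1 (k := k) (C := C)) LinearMap.id)) ∘ₗ
      (TensorProduct.assoc k C C C).toLinearMap := by
    ext x y z; simp
  have e2 : (TensorProduct.map D2 LinearMap.id (D1 (k := k) h)) =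
      TensorProduct.map (TensorProduct.map LinearMap.id D1) LinearMap.id
        (TensorProduct.map D1 LinearMap.id (D1 (k := k) h)) := by
    conv_rhs => rw [← LinearMap.comp_apply, ← TensorProduct.map_comp]
    rfl
  have := LinearMap.congr_fun e1 (TensorProduct.map D1 LinearMap.id (D1 (k := k) h))
  simp only [LinearMap.comp_apply, LinearEquiv.coe_coe] at this
  rw [e2, this, coassoc', D3_eq_mid]
  conv_rhs => rw [← LinearMap.comp_apply, ← TensorProduct.map_comp]
  rfl

end

variable (S : CrossedProduct k A H E) (finv : H →ₗ[k] H →ₗ[k] A)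

/-- `x ⊗ (y ⊗ z) ↦ f⁻¹(S y, z) # S x`. -/
def G3 : H ⊗[k] (H ⊗[k] H) →ₗ[k] E :=
  TensorProduct.lift (LinearMap.compl₁₂ (LinearMap.mul k E)
    (S.aE ∘ₗ TensorProduct.lift (finv ∘ₗ HopfAlgebra.antipode k))
      (S.hE ∘ₗ HopfAlgebra.antipode k)).flip

lemma G3_tmul (x y z : H) : G3 S finv (x ⊗ₜ (y ⊗ₜ z)) =
   S.ι (finv (HopfAlgebra.antipode k y) z ⊗ₜ HopfAlgebra.antipode k x) := by
  rw [ι_eq]; simp [G3]; rfl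

def Gam : WithConv (H →ₗ[k] E) := toConv (G3 S finv ∘ₗ D2)

lemma Gam_apply (h : H) : Gam S finv h = G3 S finv (D2 h) := rfl

lemma antipode_rep {h : H} {N : ℕ} {v : Fin N → Fin 2 → H} (hv : SRep k 1 h N v) :
    SRep k 1 (HopfAlgebra.antipode k h) N
      (fun i => ![HopfAlgebra.antipode k (v i 1), HopfAlgebra.antipode k (v i 0)]) := by
  rw [SRep_one_iff, comul_antipode' h hv]; simp

variable {finv}

lemma Gam_mul_gam (hf : IsConvInverse S.f finv) : Gam S finv * gam S = 1 := by
  apply conv_ext; intro h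
  let G4 : H ⊗[k] (H ⊗[k] (H ⊗[k] H)) →ₗ[k] E := LinearMap.mul' k E ∘ₗ
    TensorProduct.map (G3 S finv) S.hE ∘ₗ (TensorProduct.assoc k H (H ⊗[k] H) H).symm.toLinearMap ∘ₗ
    TensorProduct.map LinearMap.id (TensorProduct.assoc k H H H).symm.toLinearMap
  have hG4 : ∀ x y z w, G4 (x ⊗ₜ (y ⊗ₜ (z ⊗ₜ w))) = S.aE (finv (HopfAlgebra.antipode k y) z) *
      S.hE (HopfAlgebra.antipode k x) * S.hE w := by
    intro x y z w; simp [G4, G3_tmul, ι_eq, aEh_apply]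
  have e1 : (Gam S finv * gam S) h = G4 (D3 h) := by
    rw [D3_eq_left]
    have : G4 ∘ₗ TensorProduct.map LinearMap.id (TensorProduct.assoc k H H H).toLinearMap ∘ₗ
      (TensorProduct.assoc k H (H ⊗[k] H) H).toLinearMap =
        LinearMap.mul' k E ∘ₗ TensorProduct.map (G3 S finv) S.hE := by
      ext; simp [G4]
    have := LinearMap.congr_fun this (TensorProduct.map D2 LinearMap.id (D1 h))
    refine Eq.trans ?_ this.symm
    rw [LinearMap.comp_apply, ← LinearMap.comp_apply (TensorProduct.map _ _), ← TensorProduct.map_comp]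
    rfl
  have e2 : ∀ z : H ⊗[k] H, G4 (TensorProduct.assoc k H H (H ⊗[k] H) (TensorProduct.map D1 D1 z)) =
      S.hE (LinearMap.mul' k H (TensorProduct.map (HopfAlgebra.antipode k) LinearMap.id z)) := by
    have hfg : pc _ (aEh S) (fC finv) * gg S = gp S := by
      rw [gg_eq, ← mul_assoc, ← map_mul, finv_mul_f S hf, map_one, one_mul]
    intro z
    induction z with
    | zero => simp
    | add a b ha hb => simp only [map_add, ha, hb]
    | tmul x y =>
      obtain ⟨N, u, hu⟩ := exists_SRep (k := k) 1 x
      obtain ⟨N', v, hv⟩ := exists_SRep (k := k) 1 y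
      have := DFunLike.congr_fun (congrArg WithConv.ofConv hfg) ((HopfAlgebra.antipode k x) ⊗ₜ y)
      rw [conv_tmul_apply (antipode_rep hu) hv] at this
      simp only [pc_apply, Matrix.cons_val_zero, Matrix.cons_val_one, fC_apply, gg_apply,
        gp_apply] at this
      rw [TensorProduct.map_tmul, TensorProduct.map_tmul, LinearMap.mul'_apply, LinearMap.id_apply, ← this]
      rw [SRep_one_iff] at hu hv
      rw [hu, hv, TensorProduct.sum_tmul, map_sum, map_sum]
      refine Finset.sum_congr rfl fun i _ => ?_
      rw [TensorProduct.tmul_sum, map_sum, map_sum]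
      refine Finset.sum_congr rfl fun j _ => ?_
      simp [hG4, aEh_apply, mul_assoc]
  rw [e1, D3_eq, e2]
  have := HopfAlgebra.mul_antipode_rTensor_comul_apply (R := k) h
  refine (congrArg S.hE this).trans ?_
  simp [Algebra.algebraMap_eq_smul_one, hE_one]

def Uu : Submodule k E := LinearMap.range S.aE

lemma Uu_mul {x y : E} (hx : x ∈ Uu S) (hy : y ∈ Uu S) : x * y ∈ Uu S := by
  obtain ⟨a, rfl⟩ := hx
  obtain ⟨b, rfl⟩ := hy
  exact ⟨a * b, map_mul (aEh S) a b⟩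

lemma q_mem (h : H) : (gam S * toConv (S.hE ∘ₗ HopfAlgebra.antipode k)) h ∈ Uu S := by
  let Q : H ⊗[k] (H ⊗[k] (H ⊗[k] H)) →ₗ[k] E := LinearMap.mul' k E ∘ₗ
    TensorProduct.map (S.aE ∘ₗ TensorProduct.lift (S.f.compl₂ (HopfAlgebra.antipode k)))
     (S.hE ∘ₗ LinearMap.mul' k H ∘ₗ LinearMap.lTensor H (HopfAlgebra.antipode k)) ∘ₗ
     (TensorProduct.assoc k H H (H ⊗[k] H)).symm.toLinearMap ∘ₗ
     TensorProduct.map LinearMap.id ((TensorProduct.comm k (H ⊗[k] H) H).toLinearMap ∘ₗ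
       (TensorProduct.assoc k H H H).symm.toLinearMap)
  have hQ : ∀ x y z w, Q (x ⊗ₜ (y ⊗ₜ (z ⊗ₜ w))) = S.aE (S.f x (HopfAlgebra.antipode k w)) *
      S.hE (y * HopfAlgebra.antipode k z) := by
    intro x y z w; simp [Q]
  have e1 : (gam S * toConv (S.hE ∘ₗ HopfAlgebra.antipode k)) h = Q (D3 h) := by
    rw [D3_eq]
    have : Q ∘ₗ (TensorProduct.assoc k H H (H ⊗[k] H)).toLinearMap ∘ₗ TensorProduct.map D1 D1 =
      LinearMap.mul' k E ∘ₗ TensorProduct.map S.hE (S.hE ∘ₗ HopfAlgebra.antipode k) := by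
      apply TensorProduct.ext'; intro x y
      obtain ⟨N, u, hu⟩ := exists_SRep (k := k) 1 x
      obtain ⟨N', v, hv⟩ := exists_SRep (k := k) 1 y
      have := DFunLike.congr_fun (congrArg WithConv.ofConv (gg_eq S)) (x ⊗ₜ (HopfAlgebra.antipode k y))
      rw [conv_tmul_apply hu (antipode_rep hv)] at this
      simp only [pc_apply, Matrix.cons_val_zero, Matrix.cons_val_one, fC_apply, gg_apply,
        gp_apply] at this
      refine Eq.trans ?_ this.symm
      rw [SRep_one_iff] at hu hv
      simp only [LinearMap.comp_apply, TensorProduct.map_tmul]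
      rw [hu, hv, TensorProduct.sum_tmul, map_sum, map_sum]
      refine Finset.sum_congr rfl fun i _ => ?_
      rw [TensorProduct.tmul_sum, map_sum, map_sum]
      refine Finset.sum_congr rfl fun j _ => ?_
      simp [hQ, aEh_apply]
    exact (LinearMap.congr_fun this (D1 h)).symm
  rw [e1, D3_eq_mid]
  generalize D2 (k := k) h = z
  induction z with
  | zero => simp
  | add a b ha hb => rw [map_add, map_add]; exact add_mem ha hb
  | tmul x y =>
    induction y with
    | zero => simp
    | add a b ha hb => rw [TensorProduct.tmul_add, map_add, map_add]; exact add_mem ha hb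
    | tmul s w =>
      refine ⟨Coalgebra.counit (R := k) s • S.f x (HopfAlgebra.antipode k w), ?_⟩
      have key : ∀ t : H ⊗[k] H, Q (x ⊗ₜ (TensorProduct.assoc k H H H (t ⊗ₜ w))) =
         S.aE (S.f x (HopfAlgebra.antipode k w)) *
           S.hE (LinearMap.mul' k H (LinearMap.lTensor H (HopfAlgebra.antipode k) t)) := by
        intro t
        induction t with
        | zero => simp
        | add a b ha hb => simp only [map_add, TensorProduct.add_tmul, TensorProduct.tmul_add, ha, hb, mul_add]
        | tmul a b => simp [hQ]
      refine Eq.trans ?_ (key (D1 s)).symm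
      rw [HopfAlgebra.mul_antipode_lTensor_comul_apply]
      simp [Algebra.algebraMap_eq_smul_one, hE_one]

lemma P_mem (h : H) : (gam S * Gam S finv) h ∈ Uu S := by
  let T : H ⊗[k] (H ⊗[k] (H ⊗[k] H)) →ₗ[k] E := LinearMap.mul' k E ∘ₗ
    TensorProduct.map S.hE (G3 S finv) 
  have hT : ∀ x y z w, T (x ⊗ₜ (y ⊗ₜ (z ⊗ₜ w))) = S.hE x * (aEh S (finv (HopfAlgebra.antipode k z) w) *
      S.hE (HopfAlgebra.antipode k y)) := by
    intro x y z w; simp [T, G3_tmul, ι_eq]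
  have e1 : (gam S * Gam S finv) h = T (D3 h) := by
    have : (gam S * Gam S finv) h = LinearMap.mul' k E (TensorProduct.map S.hE (G3 S finv ∘ₗ D2) (D1 h)) := rfl
    rw [this]
    simp only [T, LinearMap.comp_apply]
    conv_rhs => rw [← LinearMap.comp_apply (TensorProduct.map _ _), ← TensorProduct.map_comp]
    rfl
  rw [e1, D3_eq]
  generalize D1 (k := k) h = z
  induction z with
  | zero => simp
  | add a b ha hb => simp only [map_add]; exact add_mem ha hb
  | tmul x y =>
    rw [TensorProduct.map_tmul]
    generalize D1 (k := k) y = z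
    induction z with
    | zero => simp
    | add a b ha hb => simp only [map_add, TensorProduct.tmul_add]; exact add_mem ha hb
    | tmul s w =>
      set b := finv (HopfAlgebra.antipode k s) w
      have key : T (TensorProduct.assoc k H H (H ⊗[k] H) (D1 x ⊗ₜ (s ⊗ₜ w))) =
        (gam S * Kc (k := k) H (aEh S b) * toConv (S.hE ∘ₗ HopfAlgebra.antipode k) : WithConv (H →ₗ[k] E)) x := by
        obtain ⟨N, u, hu⟩ := exists_SRep (k := k) 1 x
        rw [hu.conv_apply]
        rw [SRep_one_iff] at hu
        rw [hu, TensorProduct.sum_tmul, map_sum, map_sum]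
        refine Finset.sum_congr rfl fun i _ => ?_
        rw [mul_Kc_apply]
        simp [hT, mul_assoc, b]
      rw [key, ← act_gam, mul_assoc]
      obtain ⟨N, u, hu⟩ := exists_SRep (k := k) 1 x
      rw [hu.conv_apply]
      refine sum_mem fun i _ => Uu_mul S ⟨_, rfl⟩ (q_mem S _)

lemma gam_mul_Gam (hf : IsConvInverse S.f finv) : gam S * Gam S finv = 1 := by
  set P := gam S * Gam S finv with hP
  have hPg : P * gam S = gam S := by rw [hP, mul_assoc, Gam_mul_gam S hf, mul_one]
  let pr : E →ₗ[k] A := (TensorProduct.rid k A).toLinearMap ∘ₗ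
    LinearMap.lTensor A (Coalgebra.counit (R := k)) ∘ₗ S.ι.symm.toLinearMap
  have hpr : ∀ a h, pr (aEh S a * S.hE h) = Coalgebra.counit (R := k) h • a := by
    intro a h
    rw [← ι_eq]; simp [pr]
  have hpr' : ∀ x ∈ Uu S, aEh S (pr x) = x := by
    rintro _ ⟨a, rfl⟩
    have := hpr a 1
    rw [hE_one, mul_one] at this
    rw [← aEh_apply, this]; simp
  have hpr2 : ∀ x ∈ Uu S, ∀ h, pr (x * S.hE h) = Coalgebra.counit (R := k) h • pr x := by
    intro x hx h
    rw [← hpr, hpr' x hx]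
  apply conv_ext; intro h
  have h1 := congrArg (fun F : WithConv (H →ₗ[k] E) => pr (F h)) hPg
  obtain ⟨N, u, hu⟩ := exists_SRep (k := k) 1 h
  simp only [hu.conv_apply, map_sum, gam_apply] at h1
  simp only [hpr2 _ (P_mem S _), P] at h1
  have h2 := hpr 1 h
  rw [map_one, one_mul] at h2
  rw [h2] at h1
  simp only [← map_smul, ← map_sum] at h1
  have h3 := sum_counit_right hu
  rw [← hpr' _ (P_mem S h)]
  have h4 : pr ((gam S * Gam S finv) h) = Coalgebra.counit (R := k) h • 1 := by
    rw [← h1]; conv_lhs => rw [← h3]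
  rw [h4]; simp [Algebra.algebraMap_eq_smul_one]

end Inv

section Cons
open WithConv

variable {k A H E : Type} [CommRing k] [Ring A] [Algebra k A] [Ring H] [HopfAlgebra k H]
  [Ring E] [Algebra k E]

section
variable (k)
variable {H H' : Type} [AddCommGroup H] [Module k H] [AddCommGroup H'] [Module k H']

def mergeL (H H' : Type) [AddCommGroup H] [Module k H] [AddCommGroup H'] [Module k H'] :
    ∀ n : ℕ, Tpow k H n ⊗[k] Tpow k H' n →ₗ[k] Tpow k (H ⊗[k] H') n
  | 0 => (zeroE (H ⊗[k] H')).toLinearMap ∘ₗ LinearMap.mul' k k ∘ₗ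
      TensorProduct.map (zeroE H).symm.toLinearMap (zeroE H').symm.toLinearMap
  | n + 1 => (consE (H ⊗[k] H') n).toLinearMap ∘ₗ TensorProduct.map LinearMap.id (mergeL H H' n) ∘ₗ
      (TensorProduct.tensorTensorTensorComm k H (Tpow k H n) H' (Tpow k H' n)).toLinearMap ∘ₗ
      TensorProduct.map (consE H n).symm.toLinearMap (consE H' n).symm.toLinearMap

lemma mergeL_cons (n : ℕ) (x : H) (y : H') (w : Tpow k H n) (w' : Tpow k H' n) :
    mergeL k H H' (n + 1) (consE H n (x ⊗ₜ w) ⊗ₜ consE H' n (y ⊗ₜ w')) =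
      consE _ n ((x ⊗ₜ y) ⊗ₜ mergeL k H H' n (w ⊗ₜ w')) := by
  simp [mergeL]

lemma mergeL_tp : ∀ (n : ℕ) (u : Fin n → H) (v : Fin n → H'),
    mergeL k H H' n (tp k u ⊗ₜ tp k v) = tp k (fun i => u i ⊗ₜ v i)
  | 0, u, v => by simp [mergeL, tp_zero]
  | n + 1, u, v => by
    rw [tp_succ, tp_succ, mergeL_cons, mergeL_tp n]; rfl

end

lemma mergeL_itComul : ∀ (n : ℕ) (h l : H), mergeL k H H (n + 1) (itComul k n h ⊗ₜ itComul k n l) =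
    itComul k n (h ⊗ₜ[k] l)
  | 0, h, l => by
    rw [itComul_zero, itComul_zero, mergeL_cons, itComul_zero]
    congr 2
    simp [mergeL]
  | n + 1, h, l => by
    obtain ⟨N, u, hu⟩ := exists_SRep (k := k) 1 h
    obtain ⟨N', v, hv⟩ := exists_SRep (k := k) 1 l
    rw [SRep_one_iff] at hu hv
    rw [itComul_succ, itComul_succ, itComul_succ, TensorProduct.comul_tmul, hu, hv]
    simp only [map_sum, TensorProduct.map_tmul, TensorProduct.sum_tmul, TensorProduct.tmul_sum,
      mergeL_cons, mergeL_itComul n, LinearMap.id_apply,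
      TensorProduct.AlgebraTensorModule.tensorTensorTensorComm_tmul]

lemma itComul_merge {n : ℕ} {h l : H} {N N' : ℕ} {u : Fin N → Fin (n + 1) → H}
    {v : Fin N' → Fin (n + 1) → H} (hu : SRep k n h N u) (hv : SRep k n l N' v) :
    itComul k n (h ⊗ₜ[k] l) = ∑ p : Fin N × Fin N', tp k (fun j => u p.1 j ⊗ₜ[k] v p.2 j) := by
  unfold SRep at hu hv
  rw [← mergeL_itComul, hu, hv, Fintype.sum_prod_type]
  simp only [map_sum, TensorProduct.sum_tmul, TensorProduct.tmul_sum, mergeL_tp]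
  exact Finset.sum_comm

variable (S : CrossedProduct k A H E) {finv : H →ₗ[k] H →ₗ[k] A}

lemma Gam_act (hf : IsConvInverse S.f finv) (a : A) :
    Gam S finv * pc H (aEh S) (ActA S a) = Kc H (aEh S a) * Gam S finv := by
  calc _ = Gam S finv * pc H (aEh S) (ActA S a) * (gam S * Gam S finv) := by
        rw [gam_mul_Gam S hf, mul_one]
    _ = Gam S finv * (pc H (aEh S) (ActA S a) * gam S) * Gam S finv := by simp only [mul_assoc]
    _ = (Gam S finv * gam S) * Kc H (aEh S a) * Gam S finv := by rw [act_gam]; simp only [mul_assoc]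
    _ = _ := by rw [Gam_mul_gam S hf, one_mul]

variable (finv) in
def GGm : WithConv (H ⊗[k] H →ₗ[k] E) :=
  toConv (TensorProduct.lift (LinearMap.compl₁₂ (LinearMap.mul k E) (Gam S finv).ofConv (Gam S finv).ofConv).flip)

lemma GGm_apply (h l : H) : GGm S finv (h ⊗ₜ l) = Gam S finv l * Gam S finv h := rfl

lemma GGm_gg (hf : IsConvInverse S.f finv) : GGm S finv * gg S = 1 := by
  apply conv2_ext; intro h l
  obtain ⟨N, u, hu⟩ := exists_SRep (k := k) 1 h
  obtain ⟨N', v, hv⟩ := exists_SRep (k := k) 1 l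
  rw [conv_tmul_apply hu hv, Finset.sum_comm]
  have e1 := fun x : H => DFunLike.congr_fun (congrArg WithConv.ofConv (Gam_mul_gam S hf)) x
  have eh := e1 h
  have el := e1 l
  rw [hu.conv_apply] at eh
  rw [hv.conv_apply] at el
  have : ∀ j, ∑ i, GGm S finv (u i 0 ⊗ₜ v j 0) * gg S (u i 1 ⊗ₜ v j 1) =
     Coalgebra.counit (R := k) h • (Gam S finv (v j 0) * gam S (v j 1)) := by
    intro j
    have := congrArg (fun z => Gam S finv (v j 0) * z * gam S (v j 1)) eh
    simp only [Finset.mul_sum, Finset.sum_mul] at this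
    refine Eq.trans ?_ (this.trans ?_)
    · refine Finset.sum_congr rfl fun i _ => ?_
      simp [GGm_apply, mul_assoc]
    · simp [Algebra.algebraMap_eq_smul_one]
  simp only [this]
  rw [← Finset.smul_sum, el]
  simp [Algebra.algebraMap_eq_smul_one, smul_smul, mul_comm]

variable (finv) in
def Gp : WithConv (H ⊗[k] H →ₗ[k] E) := prc (Bialgebra.mulCoalgHom k H) (Gam S finv)

lemma Gp_gp (hf : IsConvInverse S.f finv) : Gp S finv * gp S = 1 := by
  rw [Gp, gp, ← map_mul, Gam_mul_gam S hf, map_one]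
lemma gp_Gp (hf : IsConvInverse S.f finv) : gp S * Gp S finv = 1 := by
  rw [Gp, gp, ← map_mul, gam_mul_Gam S hf, map_one]

lemma GGm_f (hf : IsConvInverse S.f finv) : GGm S finv * pc _ (aEh S) (fC S.f) = Gp S finv := by
  refine left_inv_eq_right_inv ?_ (gp_Gp S hf)
  rw [mul_assoc, ← gg_eq, GGm_gg S hf]

lemma GGm_rho (hf : IsConvInverse S.f finv) (a : A) :
    GGm S finv * pc _ (aEh S) (rhoA S a) = Kc _ (aEh S a) * GGm S finv := by
  have hg : gg S * (Gp S finv * pc _ (aEh S) (fC finv)) = 1 := by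
    rw [gg_eq]
    calc _ = pc _ (aEh S) (fC S.f) * (gp S * Gp S finv) * pc _ (aEh S) (fC finv) := by
          simp only [mul_assoc]
      _ = 1 := by rw [gp_Gp S hf, mul_one, ← map_mul, f_mul_finv S hf, map_one]
  have e : pc _ (aEh S) (rhoA S a) * gg S = gg S * Kc _ (aEh S a) := by
    rw [gg_eq, ← mul_assoc, ← map_mul, twisted, map_mul, mul_assoc, sig_gp, mul_assoc]
  have e2 : GGm S finv * pc _ (aEh S) (rhoA S a) * gg S = Kc _ (aEh S a) * GGm S finv * gg S := by
    rw [mul_assoc, e, ← mul_assoc, mul_assoc (Kc _ _), GGm_gg S hf, one_mul, mul_one]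
  have := congrArg (· * (Gp S finv * pc _ (aEh S) (fC finv))) e2
  simpa only [mul_assoc, hg, mul_one] using this

/-- three-slot version of `GGm`. -/
def GG3 (finv : H →ₗ[k] H →ₗ[k] A) :
    (H ⊗[k] H) ⊗[k] ((H ⊗[k] H) ⊗[k] (H ⊗[k] H)) →ₗ[k] E :=
  LinearMap.mul' k E ∘ₗ (TensorProduct.comm k E E).toLinearMap ∘ₗ
    TensorProduct.map (G3 S finv) (G3 S finv) ∘ₗ
    (TensorProduct.tensorTensorTensorComm k H H (H ⊗[k] H) (H ⊗[k] H)).toLinearMap ∘ₗ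
    TensorProduct.map LinearMap.id (TensorProduct.tensorTensorTensorComm k H H H H).toLinearMap

lemma GG3_tmul (x x' y y' z z' : H) : GG3 S finv ((x ⊗ₜ x') ⊗ₜ ((y ⊗ₜ y') ⊗ₜ (z ⊗ₜ z'))) =
    G3 S finv (x' ⊗ₜ (y' ⊗ₜ z')) * G3 S finv (x ⊗ₜ (y ⊗ₜ z)) := by
  simp [GG3]

lemma GGm_eq : GGm S finv = toConv (GG3 S finv ∘ₗ D2) := by
  apply conv2_ext; intro h l
  obtain ⟨N, u, hu⟩ := exists_SRep (k := k) 2 h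
  obtain ⟨N', v, hv⟩ := exists_SRep (k := k) 2 l
  have e := congrArg (three (k := k) (H ⊗[k] H)) (itComul_merge hu hv)
  rw [three_itComul, map_sum, Fintype.sum_prod_type] at e
  simp only [three_tp] at e
  rw [SRep_two_iff] at hu hv
  rw [GGm_apply, Gam_apply, Gam_apply]
  refine Eq.trans ?_ (congrArg (GG3 S finv) e).symm
  simp only [LinearMap.comp_apply, hu, hv, map_sum, GG3_tmul, Finset.sum_mul, Finset.mul_sum]
  

end Cons

section Words

variable {R : Type} [Ring R]

def Wd (t : R) : ∀ {n : ℕ}, (Fin n → R) → R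
  | 0, _ => t
  | _ + 1, y => t * y 0 * Wd t (fun i => y i.succ)

def dWd (t : R) : ∀ {n : ℕ}, (Fin n → R) → R
  | 0, _ => 1
  | _ + 1, y => y 0 * Wd t (fun i => y i.succ) - t * y 0 * dWd t (fun i => y i.succ)

lemma Wd_zero (t : R) (y : Fin 0 → R) : Wd t y = t := rfl
lemma Wd_succ (t : R) {n : ℕ} (y : Fin (n + 1) → R) :
    Wd t y = t * y 0 * Wd t (fun i => y i.succ) := rfl
lemma dWd_zero (t : R) (y : Fin 0 → R) : dWd t y = 1 := rfl
lemma dWd_succ (t : R) {n : ℕ} (y : Fin (n + 1) → R) :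
    dWd t y = y 0 * Wd t (fun i => y i.succ) - t * y 0 * dWd t (fun i => y i.succ) := rfl

lemma map_Wd {R' : Type} [Ring R'] (φ : R →+* R') (t : R) : ∀ {n : ℕ} (y : Fin n → R),
    φ (Wd t y) = Wd (φ t) (fun i => φ (y i))
  | 0, _ => rfl
  | n + 1, y => by rw [Wd_succ, Wd_succ, map_mul, map_mul, map_Wd]

lemma Wd_head (t : R) : ∀ {n : ℕ} (y : Fin n → R), ∃ X, Wd t y = t * X
  | 0, y => ⟨1, by simp [Wd_zero]⟩
  | n + 1, y => ⟨_, by rw [Wd_succ, mul_assoc]⟩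

section mulAt
variable {A : Type} [Mul A] {n : ℕ} (y : Fin (n + 2) → A)

lemma mulAt_zero_zero : mulAt y 0 0 = y 0 * y 1 := by simp [mulAt]
lemma mulAt_zero_succ (j : Fin n) : mulAt y 0 j.succ = y j.succ.succ := by simp [mulAt]
lemma mulAt_succ_zero (p : Fin n) : mulAt y p.succ 0 = y 0 := by simp [mulAt]
lemma mulAt_succ_succ (p : Fin n) (j : Fin n) :
    mulAt y p.succ j.succ = mulAt (fun i => y i.succ) p j := by
  simp [mulAt]

lemma mulAt_map {R : Type} [Mul R] (σ : A → R) (hσ : ∀ a b, σ (a * b) = σ a * σ b) {n : ℕ}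
    (y : Fin (n + 1) → A) (p j : Fin n) : σ (mulAt y p j) = mulAt (fun i => σ (y i)) p j := by
  unfold mulAt
  split_ifs <;> simp [hσ]
end mulAt

lemma dWd_explicit (t : R) : ∀ {n : ℕ} (y : Fin (n + 1) → R),
    dWd t y = y 0 * Wd t (fun i => y i.succ)
      + (∑ p : Fin n, ((-1 : ℤ) ^ ((p : ℕ) + 1)) • Wd t (mulAt y p))
      + ((-1 : ℤ) ^ (n + 1)) • (Wd t (fun i => y i.castSucc) * y (Fin.last n))
  | 0, y => by simp [dWd_succ, dWd_zero, Wd_zero, sub_eq_add_neg]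
  | n + 1, y => by
    rw [dWd_succ, dWd_explicit (n := n), Fin.sum_univ_succ]
    have e0 : Wd t (mulAt y 0) = t * (y 0 * y 1) * Wd t (fun i : Fin n => y i.succ.succ) := by
      rw [Wd_succ, mulAt_zero_zero]; simp only [mulAt_zero_succ]
    have e1 : ∀ p : Fin n, Wd t (mulAt y p.succ) = t * y 0 * Wd t (mulAt (fun i => y i.succ) p) := by
      intro p
      rw [Wd_succ, mulAt_succ_zero]; simp only [mulAt_succ_succ]
    have e2 : Wd t (fun i : Fin (n + 1) => y i.castSucc) =
      t * y 0 * Wd t (fun i : Fin n => y i.castSucc.succ) := by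
      rw [Wd_succ]; rfl
    simp only [e0, e1, e2, Fin.val_zero, Fin.val_succ, pow_succ (-1 : ℤ), pow_zero]
    simp only [mul_neg, mul_one, neg_smul, one_smul, mul_add, Finset.mul_sum, mul_smul_comm,
      Finset.sum_neg_distrib, neg_neg, Fin.succ_last, Fin.succ_zero_eq_one]
    simp only [← mul_assoc]
    abel

section Zs
variable {A : Type} (t f : R) (σ ρ : A → R)

def Zs : ∀ {n : ℕ}, (Fin n → A) → R
  | 0, _ => t * f * t
  | _ + 1, a => t * f * Wd t (fun i => σ (a i)) - t * ρ (a 0) * Zs (fun i => a i.succ)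

def dZs : ∀ {n : ℕ}, (Fin n → A) → R
  | 0, _ => f * t - t * f
  | _ + 1, a => (f * Wd t (fun i => σ (a i)) - t * f * dWd t (fun i => σ (a i)))
      - (ρ (a 0) * Zs t f σ ρ (fun i => a i.succ) - t * ρ (a 0) * dZs (fun i => a i.succ))

def Zd : ∀ {n : ℕ}, (Fin n → A) → R
  | 0, _ => 0
  | _ + 1, a => ρ (a 0) * Zs t f σ ρ (fun i => a i.succ)
      - t * f * t * σ (a 0) * dWd t (fun i => σ (a i.succ)) + t * ρ (a 0) * Zd (fun i => a i.succ)

lemma Zs_head : ∀ {n : ℕ} (a : Fin n → A), ∃ X, Zs t f σ ρ a = t * X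
  | 0, a => ⟨_, by rw [Zs, mul_assoc]⟩
  | n + 1, a => ⟨_, by rw [Zs, mul_assoc, mul_assoc, ← mul_sub]⟩

lemma dZs_add_Zd (h : ∀ a, ρ a * f = f * σ a) : ∀ {n : ℕ} (a : Fin n → A),
    dZs t f σ ρ a + Zd t f σ ρ a =
      f * Wd t (fun i => σ (a i)) - Wd t (fun i => ρ (a i)) * f
  | 0, a => by simp [dZs, Zd, Wd_zero]
  | n + 1, a => by
    have ih := dZs_add_Zd h (fun i => a i.succ)
    have ih' : t * ρ (a 0) * dZs t f σ ρ (fun i => a i.succ) =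
      t * ρ (a 0) * (f * Wd t (fun i => σ (a i.succ))) - t * ρ (a 0) * (Wd t (fun i => ρ (a i.succ)) * f)
       - t * ρ (a 0) * Zd t f σ ρ (fun i => a i.succ) := by
      rw [← mul_sub, ← mul_sub, ← ih, add_sub_cancel_right]
    have e : t * ρ (a 0) * (f * Wd t (fun i => σ (a i.succ))) =
      t * f * σ (a 0) * Wd t (fun i => σ (a i.succ)) := by
      rw [← mul_assoc, mul_assoc t, h]; simp only [mul_assoc]
    rw [dZs, Zd, ih', e, dWd_succ, Wd_succ, Wd_succ]
    simp only [mul_sub, mul_add, ← mul_assoc]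
    abel

lemma Zd_explicit [Mul A] (hσ : ∀ a b, σ (a * b) = σ a * σ b) (hρ : ∀ a b, ρ (a * b) = ρ a * ρ b) :
  ∀ {n : ℕ} (a : Fin (n + 1) → A), Zd t f σ ρ a = ρ (a 0) * Zs t f σ ρ (fun i => a i.succ)
      + (∑ p : Fin n, ((-1 : ℤ) ^ ((p : ℕ) + 1)) • Zs t f σ ρ (mulAt a p))
      + ((-1 : ℤ) ^ (n + 1)) • (Zs t f σ ρ (fun i => a i.castSucc) * σ (a (Fin.last n)))
  | 0, a => by simp [Zd, Zs, dWd_zero, sub_eq_add_neg]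
  | n + 1, a => by
    have ih := Zd_explicit hσ hρ (fun i => a i.succ)
    have e0 : Zs t f σ ρ (mulAt a 0) = t * f * t * σ (a 0) * (σ (a 1) * Wd t (fun i : Fin n => σ (a i.succ.succ)))
      - t * ρ (a 0) * (ρ (a 1) * Zs t f σ ρ (fun i : Fin n => a i.succ.succ)) := by
      rw [Zs, Wd_succ, mulAt_zero_zero]; simp only [mulAt_zero_succ, hσ, hρ, mul_assoc]
    have e1 : ∀ p : Fin n, Zs t f σ ρ (mulAt a p.succ) =
      t * f * t * σ (a 0) * Wd t (mulAt (fun i => σ (a i.succ)) p) -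
      t * ρ (a 0) * Zs t f σ ρ (mulAt (fun i => a i.succ) p) := by
      intro p
      rw [Zs, Wd_succ, mulAt_succ_zero]
      simp only [mulAt_succ_succ, mulAt_map σ hσ, mul_assoc]
    have e2 : Zs t f σ ρ (fun i : Fin (n + 1) => a i.castSucc) =
      t * f * t * σ (a 0) * Wd t (fun i : Fin n => σ (a i.castSucc.succ)) -
        t * ρ (a 0) * Zs t f σ ρ (fun i : Fin n => a i.castSucc.succ) := by
      rw [Zs, Wd_succ]; simp only [mul_assoc]; rfl
    rw [Zd, ih, dWd_explicit, Fin.sum_univ_succ]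
    simp only [e0, e1, e2, Fin.val_zero, Fin.val_succ, pow_succ (-1 : ℤ), pow_zero]
    simp only [mul_neg, mul_one, neg_smul, one_smul, mul_add, Finset.mul_sum, mul_smul_comm,
      Finset.sum_neg_distrib, neg_neg, Fin.succ_last, Fin.succ_zero_eq_one, mul_sub, sub_mul, smul_sub,
      Finset.sum_sub_distrib]
    simp only [← mul_assoc]
    abel
end Zs

end Words

section ModelSec
open WithConv

variable {k A H E M : Type} [CommRing k] [Ring A] [Algebra k A] [Ring H] [HopfAlgebra k H]
  [Ring E] [Algebra k E] [AddCommGroup M] [Module k M]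

/-- A word model for the chain groups `M ⊗ Ā^n`. -/
structure WModel (S : CrossedProduct k A H E) (Bi : Bimod k E M) (B : Type) [Ring B]
    [Algebra k B] where
  i : E →ₐ[k] B
  t : B
  cons : Qbar k A →ₗ[k] B
  Ev : ∀ n : ℕ, M →ₗ[k] B →ₗ[k] HCh k A M n
  P1 : ∀ (n : ℕ) (m : M) (y : Fin n → A), Ev n m (Wd t (fun j => i (aEh S (y j)))) =
    m ⊗ₜ[k] tp k (fun j => qbar k A (y j))
  P2 : ∀ (n : ℕ) (m : M) (e : E) (b : B), Ev n m (i e * b) = Ev n (Bi.r e m) b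
  P3 : ∀ (n : ℕ) (m : M) (e : E) (b : B), Ev n m (b * i e) = Ev n (Bi.l e m) b
  P4 : ∀ a : A, t * i (aEh S a) * t = cons (qbar k A a) * t

variable {S : CrossedProduct k A H E} {Bi : Bimod k E M} {B : Type} [Ring B] [Algebra k B]
  (W : WModel S Bi B)
variable {C : Type} [AddCommGroup C] [Module k C] [Coalgebra k C]

namespace WModel

def ia : A →ₐ[k] B := W.i.comp (aEh S)

lemma ia_apply (a : A) : W.ia a = W.i (aEh S a) := rfl

/-- linear expansion map -/
def yzL (Z : C →ₗ[k] E) : ∀ r : ℕ, (Fin r → (C →ₗ[k] A)) → (Tpow k C (r + 1) →ₗ[k] B)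
  | 0, _ => (LinearMap.mulLeft k W.t ∘ₗ W.i.toLinearMap ∘ₗ Z) ∘ₗ (TensorProduct.rid k C).toLinearMap ∘ₗ
      TensorProduct.map LinearMap.id (zeroE C).symm.toLinearMap ∘ₗ (consE C 0).symm.toLinearMap
  | r + 1, Y => LinearMap.mul' k B ∘ₗ TensorProduct.map
      (LinearMap.mulLeft k W.t ∘ₗ W.ia.toLinearMap ∘ₗ Y 0) (yzL Z r (fun j => Y j.succ)) ∘ₗ
        (consE C (r + 1)).symm.toLinearMap

lemma yzL_zero (Z : C →ₗ[k] E) (Y : Fin 0 → (C →ₗ[k] A)) (c : C) :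
    W.yzL Z 0 Y (consE C 0 (c ⊗ₜ zeroE C 1)) = W.t * W.i (Z c) := by
  simp [yzL]

lemma yzL_succ (Z : C →ₗ[k] E) (r : ℕ) (Y : Fin (r + 1) → (C →ₗ[k] A)) (z) :
    W.yzL Z (r + 1) Y (consE C (r + 1) z) =
     LinearMap.mul' k B (TensorProduct.map
      (LinearMap.mulLeft k W.t ∘ₗ W.ia.toLinearMap ∘ₗ Y 0) (yzL W Z r (fun j => Y j.succ)) z) := by
  simp [yzL]

lemma yzL_tp (Z : C →ₗ[k] E) : ∀ (r : ℕ) (Y : Fin r → (C →ₗ[k] A)) (u : Fin (r + 1) → C),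
    W.yzL Z r Y (tp k u) = Wd W.t (fun j => W.i (aEh S (Y j (u j.castSucc)))) * W.i (Z (u (Fin.last r)))
  | 0, Y, u => by rw [tp_succ, tp_zero, yzL_zero]; rfl
  | r + 1, Y, u => by
    rw [tp_succ, yzL_succ, TensorProduct.map_tmul, yzL_tp Z r, Wd_succ, LinearMap.mul'_apply,
      ← mul_assoc]
    rfl

lemma yzL_itComul (Z : WithConv (C →ₗ[k] E)) : ∀ (r : ℕ) (Y : Fin r → WithConv (C →ₗ[k] A)) (c : C),
    W.yzL Z.ofConv r (fun j => (Y j).ofConv) (itComul k r c) =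
      (Wd (Kc C W.t) (fun j => pc C W.ia (Y j)) * pc C W.i Z) c
  | 0, Y, c => by rw [itComul_zero, yzL_zero, Wd_zero, Kc_mul_apply]; rfl
  | r + 1, Y, c => by
    obtain ⟨N, u, hu⟩ := exists_SRep (k := k) 1 c
    rw [itComul_succ, yzL_succ, Wd_succ, mul_assoc (Kc C W.t * _), hu.conv_apply]
    rw [SRep_one_iff] at hu
    rw [hu, map_sum, map_sum, map_sum]
    refine Finset.sum_congr rfl fun i _ => ?_
    rw [TensorProduct.map_tmul, TensorProduct.map_tmul, LinearMap.mul'_apply,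
      yzL_itComul Z r (fun j => Y j.succ), Kc_mul_apply]
    rfl

def topL (G : C ⊗[k] (C ⊗[k] C) →ₗ[k] E) (r : ℕ) (F : Tpow k C (r + 1) →ₗ[k] B) :
    Tpow k C (r + 4) →ₗ[k] B :=
  LinearMap.mul' k B ∘ₗ TensorProduct.map (W.i.toLinearMap ∘ₗ G) F ∘ₗ
    (TensorProduct.assoc k C (C ⊗[k] C) _).symm.toLinearMap ∘ₗ
    TensorProduct.map LinearMap.id (TensorProduct.assoc k C C _).symm.toLinearMap ∘ₗ
    TensorProduct.map LinearMap.id (TensorProduct.map LinearMap.id (consE C (r + 1)).symm.toLinearMap) ∘ₗ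
    TensorProduct.map LinearMap.id (consE C (r + 2)).symm.toLinearMap ∘ₗ
    (consE C (r + 3)).symm.toLinearMap

lemma topL_apply (G : C ⊗[k] (C ⊗[k] C) →ₗ[k] E) (r : ℕ) (F : Tpow k C (r + 1) →ₗ[k] B) (x y z w) :
    W.topL G r F (consE C (r + 3) (x ⊗ₜ (consE C (r + 2) (y ⊗ₜ consE C (r + 1) (z ⊗ₜ w))))) =
      W.i (G (x ⊗ₜ (y ⊗ₜ z))) * F w := by
  simp [topL]

lemma topL_itComul (G : C ⊗[k] (C ⊗[k] C) →ₗ[k] E) (r : ℕ) (F : Tpow k C (r + 1) →ₗ[k] B) (c : C) :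
    W.topL G r F (itComul k (r + 3) c) =
      (pc C W.i (toConv (G ∘ₗ D2)) * toConv (F ∘ₗ itComul k r)) c := by
  let G4 : C ⊗[k] (C ⊗[k] (C ⊗[k] C)) →ₗ[k] B := LinearMap.mul' k B ∘ₗ
    TensorProduct.map (W.i.toLinearMap ∘ₗ G) (F ∘ₗ itComul k r) ∘ₗ
    (TensorProduct.assoc k C (C ⊗[k] C) C).symm.toLinearMap ∘ₗ
    TensorProduct.map LinearMap.id (TensorProduct.assoc k C C C).symm.toLinearMap
  have hG4 : ∀ x y z w, G4 (x ⊗ₜ (y ⊗ₜ (z ⊗ₜ w))) = W.i (G (x ⊗ₜ (y ⊗ₜ z))) * F (itComul k r w) := by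
    intro x y z w; simp [G4]
  have e1 : (pc C W.i (toConv (G ∘ₗ D2)) * toConv (F ∘ₗ itComul k r)) c = G4 (D3 c) := by
    rw [D3_eq_left]
    have : G4 ∘ₗ TensorProduct.map LinearMap.id (TensorProduct.assoc k C C C).toLinearMap ∘ₗ
      (TensorProduct.assoc k C (C ⊗[k] C) C).toLinearMap =
        LinearMap.mul' k B ∘ₗ TensorProduct.map (W.i.toLinearMap ∘ₗ G) (F ∘ₗ itComul k r) := by
      ext; simp [G4]
    have := LinearMap.congr_fun this (TensorProduct.map D2 LinearMap.id (D1 c))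
    refine Eq.trans ?_ this.symm
    rw [LinearMap.comp_apply, ← LinearMap.comp_apply (TensorProduct.map _ _), ← TensorProduct.map_comp]
    rfl
  rw [e1, itComul_succ]
  simp only [D3, LinearMap.comp_apply]
  generalize Coalgebra.comul (R := k) c = z
  induction z with
  | zero => simp
  | add a b ha hb => simp only [map_add, ha, hb]
  | tmul x y =>
    rw [TensorProduct.map_tmul, TensorProduct.map_tmul, itComul_succ]
    simp only [D2, LinearMap.comp_apply]
    generalize Coalgebra.comul (R := k) y = z
    induction z with
    | zero => simp
    | add a b ha hb => simp only [map_add, TensorProduct.tmul_add, ha, hb]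
    | tmul y v =>
      rw [TensorProduct.map_tmul, TensorProduct.map_tmul, itComul_succ]
      simp only [D1]
      generalize Coalgebra.comul (R := k) v = z
      induction z with
      | zero => simp
      | add a b ha hb => simp only [map_add, TensorProduct.tmul_add, ha, hb]
      | tmul z w =>
        rw [TensorProduct.map_tmul]
        simp only [LinearMap.id_apply]
        rw [topL_apply, hG4]

lemma EXP (G : C ⊗[k] (C ⊗[k] C) →ₗ[k] E) {r : ℕ} (Y : Fin r → WithConv (C →ₗ[k] A))
    (Z : WithConv (C →ₗ[k] E)) {c : C} {ι : Type} [Fintype ι] {u : ι → Fin (r + 4) → C}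
    (hu : itComul k (r + 3) c = ∑ i, tp k (u i)) (m : M) :
    W.Ev r m ((pc C W.i (toConv (G ∘ₗ D2)) * Wd (Kc C W.t) (fun j => pc C W.ia (Y j)) * pc C W.i Z) c) =
    ∑ i, (Bi.l (Z (u i (Fin.last (r + 3)))) (Bi.r (G (u i 0 ⊗ₜ (u i 1 ⊗ₜ u i 2))) m)) ⊗ₜ[k]
      tp k (fun j : Fin r => qbar k A (Y j (u i ⟨(j : ℕ) + 3, by omega⟩))) := by
  have e : (Wd (Kc C W.t) (fun j => pc C W.ia (Y j)) * pc C W.i Z) =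
      toConv (W.yzL Z.ofConv r (fun j => (Y j).ofConv) ∘ₗ itComul k r) :=
    conv_ext fun c => (W.yzL_itComul Z r Y c).symm
  rw [mul_assoc, e, ← topL_itComul, hu, map_sum, map_sum]
  refine Finset.sum_congr rfl fun i _ => ?_
  have := W.topL_apply G r (W.yzL Z.ofConv r (fun j => (Y j).ofConv)) (u i 0) (u i 1) (u i 2)
    (tp k (fun j : Fin (r + 1) => u i j.succ.succ.succ))
  refine (congrArg _ this).trans ?_
  rw [yzL_tp, W.P2, W.P3, W.P1]
  rfl

end WModel
end ModelSec

section ModelSec2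
open WithConv

variable {k A H E M : Type} [CommRing k] [Ring A] [Algebra k A] [Ring H] [HopfAlgebra k H]
  [Ring E] [Algebra k E] [AddCommGroup M] [Module k M]

variable {S : CrossedProduct k A H E} {Bi : Bimod k E M} {B : Type} [Ring B] [Algebra k B]
  (W : WModel S Bi B)
variable {C : Type} [AddCommGroup C] [Module k C] [Coalgebra k C]

namespace WModel

/-- the word map `A^{⊗n} → B` -/
def wL : ∀ n : ℕ, Tpow k A n →ₗ[k] B
  | 0 => LinearMap.toSpanSingleton k B W.t ∘ₗ (zeroE A).symm.toLinearMap
  | n + 1 => LinearMap.mul' k B ∘ₗ TensorProduct.map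
      (LinearMap.mulLeft k W.t ∘ₗ W.ia.toLinearMap) (wL n) ∘ₗ (consE A n).symm.toLinearMap

lemma wL_zero : W.wL 0 (zeroE A 1) = W.t := by simp [wL]
lemma wL_cons (n : ℕ) (a : A) (w) : W.wL (n + 1) (consE A n (a ⊗ₜ w)) = W.t * W.ia a * W.wL n w := by
  simp [wL]

def dL : ∀ n : ℕ, Tpow k A n →ₗ[k] B
  | 0 => LinearMap.toSpanSingleton k B 1 ∘ₗ (zeroE A).symm.toLinearMap
  | n + 1 => LinearMap.mul' k B ∘ₗ TensorProduct.map
      W.ia.toLinearMap (W.wL n) ∘ₗ (consE A n).symm.toLinearMap - 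
      LinearMap.mul' k B ∘ₗ TensorProduct.map
      (LinearMap.mulLeft k W.t ∘ₗ W.ia.toLinearMap) (dL n) ∘ₗ (consE A n).symm.toLinearMap

lemma dL_zero : W.dL 0 (zeroE A 1) = 1 := by simp [dL]
lemma dL_cons (n : ℕ) (a : A) (w) : W.dL (n + 1) (consE A n (a ⊗ₜ w)) =
    W.ia a * W.wL n w - W.t * W.ia a * W.dL n w := by
  simp [dL]

lemma wL_tp : ∀ (n : ℕ) (y : Fin n → A), W.wL n (tp k y) = Wd W.t (fun j => W.ia (y j))
  | 0, y => W.wL_zero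
  | n + 1, y => by rw [tp_succ, wL_cons, wL_tp n]; rfl

lemma dL_tp : ∀ (n : ℕ) (y : Fin n → A), W.dL n (tp k y) = dWd W.t (fun j => W.ia (y j))
  | 0, y => W.dL_zero
  | n + 1, y => by rw [tp_succ, dL_cons, dL_tp n, wL_tp]; rfl

variable {bd : ∀ n : ℕ, HCh k A M (n + 1) →ₗ[k] HCh k A M n}

lemma bd_Ev (hbd : IsHochschildD k (Bi.l ∘ₗ S.aE) (Bi.r ∘ₗ S.aE) bd) (n : ℕ) (m : M)
    (w : Tpow k A (n + 1)) : bd n (W.Ev (n + 1) m (W.wL (n + 1) w)) = W.Ev n m (W.dL (n + 1) w) := by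
  have : bd n ∘ₗ W.Ev (n + 1) m ∘ₗ W.wL (n + 1) = W.Ev n m ∘ₗ W.dL (n + 1) := by
    apply Tpow_hom_ext (fun a : A => a) Function.surjective_id
    intro y
    simp only [LinearMap.comp_apply]
    rw [wL_tp, dL_tp, dWd_explicit]
    refine (congrArg (bd n) (W.P1 (n + 1) m y)).trans ?_
    rw [hbd]
    simp only [map_add, map_sum, map_zsmul]
    refine congrArg₂ _ (congrArg₂ _ ?_ ?_) ?_
    · rw [ia_apply, W.P2]; exact (W.P1 n _ _).symm
    · refine Finset.sum_congr rfl fun p _ => ?_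
      rw [← W.P1 n]
      congr 3
      funext j
      exact mulAt_map (fun a => W.i (aEh S a)) (fun a b => by simp) y p j
    · rw [ia_apply, W.P3]; exact congrArg _ (W.P1 n _ _).symm
  exact LinearMap.congr_fun this w

lemma conv_sub_apply (F G : WithConv (C →ₗ[k] B)) (c : C) : (F - G) c = F c - G c := rfl

/-- pairs `(X, dX)`. -/
def Good (n : ℕ) (X X' : WithConv (C →ₗ[k] B)) : Prop :=
  ∃ V : C →ₗ[k] Tpow k A n, X = toConv (W.wL n ∘ₗ V) ∧ X' = toConv (W.dL n ∘ₗ V)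

lemma Good.zero : W.Good 0 (Kc C W.t) (1 : WithConv (C →ₗ[k] B)) := by
  refine ⟨(Coalgebra.counit (R := k)).smulRight (zeroE A 1), conv_ext fun c => ?_, conv_ext fun c => ?_⟩
  · simp [wL_zero]
  · simp [dL_zero, Algebra.algebraMap_eq_smul_one]

variable {W} in
lemma Good.sub {n : ℕ} {X X' Y Y' : WithConv (C →ₗ[k] B)} (h : W.Good n X X') (h' : W.Good n Y Y') :
    W.Good n (X - Y) (X' - Y') := by
  obtain ⟨V, rfl, rfl⟩ := h
  obtain ⟨V', rfl, rfl⟩ := h'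
  exact ⟨V - V', conv_ext fun c => by simp, conv_ext fun c => by simp⟩

variable {W} in
lemma Good.cons {n : ℕ} {X X' : WithConv (C →ₗ[k] B)} (h : W.Good n X X') (y : WithConv (C →ₗ[k] A)) :
    W.Good (n + 1) (Kc C W.t * pc C W.ia y * X) (pc C W.ia y * X - Kc C W.t * pc C W.ia y * X') := by
  obtain ⟨V, rfl, rfl⟩ := h
  refine ⟨(consE A n).toLinearMap ∘ₗ TensorProduct.map y.ofConv V ∘ₗ Coalgebra.comul (R := k),
    conv_ext fun c => ?_, conv_ext fun c => ?_⟩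
  · obtain ⟨N, u, hu⟩ := exists_SRep (k := k) 1 c
    rw [hu.conv_apply]
    rw [SRep_one_iff] at hu
    simp only [LinearMap.comp_apply, hu, map_sum, Kc_mul_apply, TensorProduct.map_tmul,
      LinearEquiv.coe_coe, wL_cons, pc_apply]
  · obtain ⟨N, u, hu⟩ := exists_SRep (k := k) 1 c
    rw [conv_sub_apply, hu.conv_apply, hu.conv_apply]
    rw [SRep_one_iff] at hu
    simp only [LinearMap.comp_apply, hu, map_sum, Kc_mul_apply, TensorProduct.map_tmul,
      LinearEquiv.coe_coe, dL_cons, pc_apply, Finset.sum_sub_distrib]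

lemma Good.word : ∀ {n : ℕ} (y : Fin n → WithConv (C →ₗ[k] A)),
    W.Good n (Wd (Kc C W.t) (fun j => pc C W.ia (y j))) (dWd (Kc C W.t) (fun j => pc C W.ia (y j)))
  | 0, y => Good.zero W
  | n + 1, y => (Good.word (fun j => y j.succ)).cons (y 0)

lemma bd_good (hbd : IsHochschildD k (Bi.l ∘ₗ S.aE) (Bi.r ∘ₗ S.aE) bd) {n : ℕ}
    {X X' : WithConv (C →ₗ[k] B)} (h : W.Good (n + 1) X X') (G Z : WithConv (C →ₗ[k] E)) (c : C) (m : M) :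
    bd n (W.Ev (n + 1) m ((pc C W.i G * X * pc C W.i Z) c)) =
      W.Ev n m ((pc C W.i G * X' * pc C W.i Z) c) := by
  obtain ⟨V, rfl, rfl⟩ := h
  obtain ⟨N, u, hu⟩ := exists_SRep (k := k) 1 c
  rw [hu.conv_apply, hu.conv_apply]
  simp only [map_sum]
  refine Finset.sum_congr rfl fun i _ => ?_
  obtain ⟨N', v, hv⟩ := exists_SRep (k := k) 1 (u i 0)
  rw [hv.conv_apply, hv.conv_apply]
  simp only [map_sum, pc_apply, W.P3, W.P2, LinearMap.comp_apply, W.bd_Ev hbd]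

lemma Ev_Kc_mul (n : ℕ) (m : M) (e : E) (X : WithConv (C →ₗ[k] B)) (c : C) :
    W.Ev n m ((pc C W.i (Kc C e) * X) c) = W.Ev n (Bi.r e m) (X c) := by
  rw [pc_Kc, Kc_mul_apply, W.P2]

lemma Ev_mul_Kc (n : ℕ) (m : M) (e : E) (X : WithConv (C →ₗ[k] B)) (c : C) :
    W.Ev n m ((X * pc C W.i (Kc C e)) c) = W.Ev n (Bi.l e m) (X c) := by
  rw [pc_Kc, mul_Kc_apply, W.P3]

lemma pc_ia (y : WithConv (C →ₗ[k] A)) : pc C W.ia y = pc C W.i (pc C (aEh S) y) := rfl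

/-- Abstract chain-map/homotopy right-hand side: pushing the outer letters through. -/
lemma Ev_left {n : ℕ} {m : M} {a : A} {G : WithConv (C →ₗ[k] E)} {y : WithConv (C →ₗ[k] A)}
    (h : G * pc C (aEh S) y = Kc C (aEh S a) * G) (X : WithConv (C →ₗ[k] B)) (c : C) :
    W.Ev n m ((pc C W.i G * (pc C W.ia y * X)) c) = W.Ev n (Bi.r (S.aE a) m) ((pc C W.i G * X) c) := by
  rw [pc_ia, ← mul_assoc, ← map_mul, h, map_mul, mul_assoc, Ev_Kc_mul]; rfl

lemma Ev_right {n : ℕ} {m : M} {a : A} {Z : WithConv (C →ₗ[k] E)} {y : WithConv (C →ₗ[k] A)}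
    (h : pc C (aEh S) y * Z = Z * Kc C (aEh S a)) (X : WithConv (C →ₗ[k] B)) (c : C) :
    W.Ev n m ((X * pc C W.ia y * pc C W.i Z) c) = W.Ev n (Bi.l (S.aE a) m) ((X * pc C W.i Z) c) := by
  rw [pc_ia, mul_assoc, ← map_mul, h, map_mul, ← mul_assoc, Ev_mul_Kc]; rfl


/-- evaluation of a sandwiched word. -/
def LL (n : ℕ) (m : M) (G Z : WithConv (C →ₗ[k] E)) (c : C) : WithConv (C →ₗ[k] B) →ₗ[k] HCh k A M n where
  toFun X := W.Ev n m ((pc C W.i G * X * pc C W.i Z) c)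
  map_add' X Y := by
    rw [mul_add, add_mul, ← map_add]; rfl
  map_smul' x X := by
    rw [mul_smul_comm, smul_mul_assoc, RingHom.id_apply, ← map_smul]; rfl

lemma LL_apply (n : ℕ) (m : M) (G Z : WithConv (C →ₗ[k] E)) (c : C) (X) :
  W.LL n m G Z c X = W.Ev n m ((pc C W.i G * X * pc C W.i Z) c) := rfl


end WModel
end ModelSec2

section ModelSec3
open WithConv

variable {k A H E M : Type} [CommRing k] [Ring A] [Algebra k A] [Ring H] [HopfAlgebra k H]
  [Ring E] [Algebra k E] [AddCommGroup M] [Module k M]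

lemma HCh_ext {r : ℕ} {X : Type} [AddCommGroup X] [Module k X] {f g : HCh k A M r →ₗ[k] X}
    (h : ∀ (m : M) (a : Fin r → A), f (m ⊗ₜ tp k (fun j => qbar k A (a j))) =
      g (m ⊗ₜ tp k (fun j => qbar k A (a j)))) : f = g := by
  apply TensorProduct.ext
  refine LinearMap.ext fun m => ?_
  apply Tpow_hom_ext (qbar k A) (Submodule.mkQ_surjective _)
  intro a
  exact h m a

variable {S : CrossedProduct k A H E} {Bi : Bimod k E M} {B : Type} [Ring B] [Algebra k B]
  (W : WModel S Bi B)
variable {C : Type} [AddCommGroup C] [Module k C] [Coalgebra k C]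
variable {bd : ∀ n : ℕ, HCh k A M (n + 1) →ₗ[k] HCh k A M n}
variable {finv : H →ₗ[k] H →ₗ[k] A} {θ : H → ∀ r : ℕ, HCh k A M r →ₗ[k] HCh k A M r}

namespace WModel

lemma bd_LL (hbd : IsHochschildD k (Bi.l ∘ₗ S.aE) (Bi.r ∘ₗ S.aE) bd) {n : ℕ}
    {X X' : WithConv (C →ₗ[k] B)} (h : W.Good (n + 1) X X') (G Z : WithConv (C →ₗ[k] E)) (c : C) (m : M) :
    bd n (W.LL (n + 1) m G Z c X) = W.LL n m G Z c X' := W.bd_good hbd h G Z c m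

lemma LL_left {n : ℕ} {m : M} {a : A} {G : WithConv (C →ₗ[k] E)} {y : WithConv (C →ₗ[k] A)}
    (h : G * pc C (aEh S) y = Kc C (aEh S a) * G) (Z : WithConv (C →ₗ[k] E)) (X : WithConv (C →ₗ[k] B)) (c : C) :
    W.LL n m G Z c (pc C W.ia y * X) = W.LL n (Bi.r (S.aE a) m) G Z c X := by
  have := W.Ev_left (n := n) (m := m) h (X * pc C W.i Z) c
  simpa only [LL_apply, mul_assoc] using this

lemma LL_right {n : ℕ} {m : M} {a : A} {Z : WithConv (C →ₗ[k] E)} {y : WithConv (C →ₗ[k] A)}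
    (h : pc C (aEh S) y * Z = Z * Kc C (aEh S a)) (G : WithConv (C →ₗ[k] E)) (X : WithConv (C →ₗ[k] B)) (c : C) :
    W.LL n m G Z c (X * pc C W.ia y) = W.LL n (Bi.l (S.aE a) m) G Z c X := by
  have := W.Ev_right (n := n) (m := m) h (pc C W.i G * X) c
  simpa only [LL_apply, mul_assoc] using this

lemma theta_eq (hθ : IsTheta S Bi finv θ) (h : H) (r : ℕ) (m : M) (a : Fin r → A) :
    θ h r (m ⊗ₜ[k] tp k (fun j => qbar k A (a j))) =
      W.LL r m (Gam S finv) (gam S) h (Wd (Kc H W.t) (fun j => pc H W.ia (ActA S (a j)))) := by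
  obtain ⟨N, u, hu⟩ := exists_SRep (k := k) (r + 3) h
  rw [hθ h r m a N u hu, LL_apply]
  refine Eq.trans ?_ (W.EXP (G3 S finv) (fun j => ActA S (a j)) (gam S) hu m).symm
  simp only [G3_tmul]
  rfl

lemma theta_mul (hθ : IsTheta S Bi finv θ) (h l : H) (r : ℕ) (m : M) (a : Fin r → A) :
    θ (h * l) r (m ⊗ₜ[k] tp k (fun j => qbar k A (a j))) =
      W.LL r m (Gp S finv) (gp S) (h ⊗ₜ l)
        (Wd (Kc (H ⊗[k] H) W.t) (fun j => pc (H ⊗[k] H) W.ia (sigA S (a j)))) := by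
  rw [W.theta_eq hθ, LL_apply, LL_apply]
  have e : (pc (H ⊗[k] H) W.i (Gp S finv) *
      (Wd (Kc (H ⊗[k] H) W.t) (fun j => pc (H ⊗[k] H) W.ia (sigA S (a j)))) *
      pc (H ⊗[k] H) W.i (gp S)) = prc (Bialgebra.mulCoalgHom k H) (pc H W.i (Gam S finv) *
        Wd (Kc H W.t) (fun j => pc H W.ia (ActA S (a j))) * pc H W.i (gam S)) := by
    rw [map_mul, map_mul, map_Wd, prc_Kc]; rfl
  rw [e, prc_apply]; rfl

lemma theta_theta (hθ : IsTheta S Bi finv θ) (h l : H) (r : ℕ) (m : M) (a : Fin r → A) :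
    θ h r (θ l r (m ⊗ₜ[k] tp k (fun j => qbar k A (a j)))) =
      W.LL r m (GGm S finv) (gg S) (h ⊗ₜ l)
        (Wd (Kc (H ⊗[k] H) W.t) (fun j => pc (H ⊗[k] H) W.ia (rhoA S (a j)))) := by
  obtain ⟨N, u, hu⟩ := exists_SRep (k := k) (r + 3) h
  obtain ⟨N', v, hv⟩ := exists_SRep (k := k) (r + 3) l
  rw [hθ l r m a N' v hv, map_sum, LL_apply, GGm_eq]
  refine Eq.trans ?_ (W.EXP (GG3 S finv) (fun j => rhoA S (a j)) (gg S) (itComul_merge hu hv) m).symm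
  rw [Fintype.sum_prod_type, Finset.sum_comm]
  refine Finset.sum_congr rfl fun j _ => ?_
  rw [hθ h r _ _ N u hu]
  refine Finset.sum_congr rfl fun i _ => ?_
  simp only [GG3_tmul, G3_tmul, Bi.r_mul, gg_apply, Bi.l_mul, rhoA_apply, LinearMap.comp_apply]
  congr 2
  exact LinearMap.congr_fun (Bi.lr_comm _ _).symm _

lemma chain (W : WModel S Bi B) (hbd : IsHochschildD k (Bi.l ∘ₗ S.aE) (Bi.r ∘ₗ S.aE) bd) (hθ : IsTheta S Bi finv θ)
    (hf : IsConvInverse S.f finv) (h : H) (r : ℕ) : bd r ∘ₗ θ h (r + 1) = θ h r ∘ₗ bd r := by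
  apply HCh_ext
  intro m a
  simp only [LinearMap.comp_apply]
  rw [W.theta_eq hθ, W.bd_LL hbd (Good.word W _), dWd_explicit, hbd]
  simp only [map_add, map_sum, map_zsmul]
  simp only [W.theta_eq hθ]
  refine congrArg₂ _ (congrArg₂ _ ?_ ?_) ?_
  · rw [W.LL_left (Gam_act S hf _)]; rfl
  · refine Finset.sum_congr rfl fun p _ => ?_
    congr 3
    funext j
    exact (mulAt_map (fun a => pc H W.ia (ActA S a)) (fun a b => by rw [ActA_mul, map_mul]) a p j).symm
  · rw [W.LL_right (act_gam S _)]; rfl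

/-! ### the homotopy -/

lemma Good.Z (σ ρ : A → WithConv (C →ₗ[k] A)) (f : WithConv (C →ₗ[k] A)) : ∀ {n : ℕ} (a : Fin n → A),
    W.Good (n + 1) (Zs (Kc C W.t) (pc C W.ia f) (fun x => pc C W.ia (σ x)) (fun x => pc C W.ia (ρ x)) a)
     (dZs (Kc C W.t) (pc C W.ia f) (fun x => pc C W.ia (σ x)) (fun x => pc C W.ia (ρ x)) a)
  | 0, a => by
    have := (Good.zero (C := C) W).cons f
    rwa [mul_one] at this
  | n + 1, a => ((Good.word W (fun j => σ (a j))).cons f).sub ((Good.Z σ ρ f (fun j => a j.succ)).cons (ρ (a 0)))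

def CF (F : WithConv (C →ₗ[k] A)) : WithConv (C →ₗ[k] B) :=
  toConv (W.cons ∘ₗ qbar k A ∘ₗ F.ofConv)

lemma CF_T (F : WithConv (C →ₗ[k] A)) :
    Kc C W.t * pc C W.ia F * Kc C W.t = W.CF F * Kc C W.t := by
  apply conv_ext; intro c
  rw [mul_Kc_apply, Kc_mul_apply, mul_Kc_apply]
  exact W.P4 (F c)

def CL (τ : A →ₗ[k] WithConv (C →ₗ[k] A)) (h1 : τ 1 = 1) : Qbar k A →ₗ[k] WithConv (C →ₗ[k] B) :=
  (unitSub k A).liftQ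
    { toFun := fun a => W.CF (τ a)
      map_add' := fun a b => conv_ext fun c => by simp [CF]
      map_smul' := fun x a => conv_ext fun c => by simp [CF] } (by
    rintro _ ⟨x, rfl⟩
    rw [LinearMap.mem_ker]
    apply conv_ext; intro c
    simp only [LinearMap.coe_mk, AddHom.coe_mk, CF, Algebra.linearMap_apply,
      Algebra.algebraMap_eq_smul_one, map_smul, h1]
    have : qbar k A (1 : A) = 0 := by
      rw [← LinearMap.mem_ker, Submodule.ker_mkQ]
      exact ⟨1, by simp⟩
    simp [Algebra.algebraMap_eq_smul_one, this])

lemma CL_apply (τ : A →ₗ[k] WithConv (C →ₗ[k] A)) (h1 : τ 1 = 1) (a : A) :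
    W.CL τ h1 (qbar k A a) = W.CF (τ a) := rfl

def QL (σ : A →ₗ[k] WithConv (C →ₗ[k] A)) (h1 : σ 1 = 1) :
    ∀ n : ℕ, Tpow k (Qbar k A) n →ₗ[k] WithConv (C →ₗ[k] B)
  | 0 => LinearMap.toSpanSingleton k _ (Kc C W.t) ∘ₗ (zeroE _).symm.toLinearMap
  | n + 1 => LinearMap.mul' k _ ∘ₗ TensorProduct.map (W.CL σ h1) (QL σ h1 n) ∘ₗ
      (consE _ n).symm.toLinearMap

def ZL (σ ρ : A →ₗ[k] WithConv (C →ₗ[k] A)) (h1 : σ 1 = 1) (h2 : ρ 1 = 1) (f : WithConv (C →ₗ[k] A)) :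
    ∀ n : ℕ, Tpow k (Qbar k A) n →ₗ[k] WithConv (C →ₗ[k] B)
  | 0 => LinearMap.toSpanSingleton k _ (W.CF f * Kc C W.t) ∘ₗ (zeroE _).symm.toLinearMap
  | n + 1 => LinearMap.mulLeft k (W.CF f) ∘ₗ W.QL σ h1 (n + 1) - 
      LinearMap.mul' k _ ∘ₗ TensorProduct.map (W.CL ρ h2) (ZL σ ρ h1 h2 f n) ∘ₗ
      (consE _ n).symm.toLinearMap

lemma QL_tp (σ : A →ₗ[k] WithConv (C →ₗ[k] A)) (h1 : σ 1 = 1) : ∀ (n : ℕ) (a : Fin n → A),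
    W.QL σ h1 n (tp k (fun j => qbar k A (a j))) = Wd (Kc C W.t) (fun j => pc C W.ia (σ (a j)))
  | 0, a => by rw [tp_zero, Wd_zero]; simp [QL]
  | n + 1, a => by
    have ih := QL_tp σ h1 n (fun j => a j.succ)
    obtain ⟨X, hX⟩ := Wd_head (Kc C W.t) (fun j => pc C W.ia (σ (a (Fin.succ j))))
    rw [tp_succ, Wd_succ, hX, ← mul_assoc, CF_T, mul_assoc, ← hX, ← ih]
    simp [QL]
    rfl

lemma ZL_tp (σ ρ : A →ₗ[k] WithConv (C →ₗ[k] A)) (h1 : σ 1 = 1) (h2 : ρ 1 = 1)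
    (f : WithConv (C →ₗ[k] A)) : ∀ (n : ℕ) (a : Fin n → A),
    W.ZL σ ρ h1 h2 f n (tp k (fun j => qbar k A (a j))) =
      Zs (Kc C W.t) (pc C W.ia f) (fun x => pc C W.ia (σ x)) (fun x => pc C W.ia (ρ x)) a
  | 0, a => by rw [tp_zero, Zs, CF_T]; simp [ZL]
  | n + 1, a => by
    have ih := ZL_tp σ ρ h1 h2 f n (fun j => a j.succ)
    obtain ⟨X, hX⟩ := Wd_head (Kc C W.t) (fun j => pc C W.ia (σ (a j)))
    obtain ⟨X', hX'⟩ := Zs_head (Kc C W.t) (pc C W.ia f) (fun x => pc C W.ia (σ x))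
      (fun x => pc C W.ia (ρ x)) (fun j => a (Fin.succ j))
    rw [Zs, hX, hX', ← mul_assoc, CF_T, mul_assoc, ← hX, ← mul_assoc _ _ X', CF_T, mul_assoc, ← hX',
      ← ih, ← W.QL_tp σ h1, tp_succ]
    simp [ZL]
    rfl

def KK (G Z : WithConv (C →ₗ[k] E)) (c : C) (n n' : ℕ)
    (L : Tpow k (Qbar k A) n →ₗ[k] WithConv (C →ₗ[k] B)) : HCh k A M n →ₗ[k] HCh k A M n' :=
  TensorProduct.lift (LinearMap.mk₂ k (fun m w => W.LL n' m G Z c (L w))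
    (fun m m' w => by simp [LL_apply]) (fun x m w => by simp [LL_apply])
    (fun m w w' => by simp) (fun x m w => by simp))

lemma KK_tmul (G Z : WithConv (C →ₗ[k] E)) (c : C) (n n' : ℕ)
    (L : Tpow k (Qbar k A) n →ₗ[k] WithConv (C →ₗ[k] B)) (m w) :
    W.KK G Z c n n' L (m ⊗ₜ w) = W.LL n' m G Z c (L w) := rfl

end WModel

variable (S) in
def sigL : A →ₗ[k] WithConv (H ⊗[k] H →ₗ[k] A) where
  toFun := sigA S
  map_add' a b := conv2_ext fun x y => by simp
  map_smul' r a := conv2_ext fun x y => by simp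
variable (S) in
def rhoL : A →ₗ[k] WithConv (H ⊗[k] H →ₗ[k] A) where
  toFun := rhoA S
  map_add' a b := conv2_ext fun x y => by simp
  map_smul' r a := conv2_ext fun x y => by simp

lemma sigL_one : sigL S 1 = 1 := sigA_one S
lemma rhoL_one : rhoL S 1 = 1 := rhoA_one S

namespace WModel

variable (finv) in
def Kh (h l : H) (n : ℕ) : HCh k A M n →ₗ[k] HCh k A M (n + 1) :=
  W.KK (GGm S finv) (gp S) (h ⊗ₜ l) n (n + 1)
    (W.ZL (sigL S) (rhoL S) sigL_one rhoL_one (fC S.f) n)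

abbrev ZZ {n : ℕ} (a : Fin n → A) : WithConv (H ⊗[k] H →ₗ[k] B) :=
  Zs (Kc (H ⊗[k] H) W.t) (pc _ W.ia (fC S.f)) (fun x => pc _ W.ia (sigA S x))
    (fun x => pc _ W.ia (rhoA S x)) a

lemma Kh_tp (h l : H) (n : ℕ) (m : M) (a : Fin n → A) :
    W.Kh finv h l n (m ⊗ₜ tp k (fun j => qbar k A (a j))) =
      W.LL (n + 1) m (GGm S finv) (gp S) (h ⊗ₜ l) (W.ZZ a) := by
  rw [Kh, KK_tmul, ZL_tp]; rfl

lemma final_id (hθ : IsTheta S Bi finv θ) (hf : IsConvInverse S.f finv) (h l : H) {n : ℕ} (m : M)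
    (a : Fin n → A) :
    W.LL n m (GGm S finv) (gp S) (h ⊗ₜ l)
      (dZs (Kc (H ⊗[k] H) W.t) (pc _ W.ia (fC S.f)) (fun x => pc _ W.ia (sigA S x))
        (fun x => pc _ W.ia (rhoA S x)) a) +
    W.LL n m (GGm S finv) (gp S) (h ⊗ₜ l)
      (Zd (Kc (H ⊗[k] H) W.t) (pc _ W.ia (fC S.f)) (fun x => pc _ W.ia (sigA S x))
        (fun x => pc _ W.ia (rhoA S x)) a) =
    θ (h * l) n (m ⊗ₜ[k] tp k (fun j => qbar k A (a j))) -
      θ h n (θ l n (m ⊗ₜ[k] tp k (fun j => qbar k A (a j)))) := by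
  rw [← map_add, dZs_add_Zd, map_sub, W.theta_mul hθ, W.theta_theta hθ]
  · rw [LL_apply, LL_apply, LL_apply, LL_apply, ← GGm_f S hf, gg_eq, map_mul, map_mul]
    simp only [pc_ia, mul_assoc]
  · intro a
    rw [← map_mul, twisted, map_mul]

lemma homotopy (hbd : IsHochschildD k (Bi.l ∘ₗ S.aE) (Bi.r ∘ₗ S.aE) bd) (hθ : IsTheta S Bi finv θ)
    (hf : IsConvInverse S.f finv) (h l : H) (n : ℕ) :
    bd (n + 1) ∘ₗ W.Kh finv h l (n + 1) + W.Kh finv h l n ∘ₗ bd n =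
      θ (h * l) (n + 1) - θ h (n + 1) ∘ₗ θ l (n + 1) := by
  apply HCh_ext
  intro m a
  simp only [LinearMap.add_apply, LinearMap.sub_apply, LinearMap.comp_apply]
  rw [← W.final_id hθ hf]
  refine congrArg₂ _ ?_ ?_
  · rw [Kh_tp, W.bd_LL hbd (Good.Z W _ _ _ a)]
  · rw [hbd, Zd_explicit _ _ _ _ (fun a b => by rw [sigA_mul, map_mul]) (fun a b => by rw [rhoA_mul, map_mul])]
    simp only [map_add, map_sum, map_zsmul]
    refine congrArg₂ _ (congrArg₂ _ ?_ ?_) ?_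
    · rw [W.Kh_tp h l n _ (fun i => a i.succ), W.LL_left (GGm_rho S hf _)]; rfl
    · refine Finset.sum_congr rfl fun p _ => ?_
      rw [W.Kh_tp h l n _ (mulAt a p)]
    · rw [W.Kh_tp h l n _ (fun i => a i.castSucc), W.LL_right (sig_gp S _)]; rfl

lemma homotopy0 (hbd : IsHochschildD k (Bi.l ∘ₗ S.aE) (Bi.r ∘ₗ S.aE) bd) (hθ : IsTheta S Bi finv θ)
    (hf : IsConvInverse S.f finv) (h l : H) :
    bd 0 ∘ₗ W.Kh finv h l 0 = θ (h * l) 0 - θ h 0 ∘ₗ θ l 0 := by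
  apply HCh_ext
  intro m a
  simp only [LinearMap.sub_apply, LinearMap.comp_apply]
  rw [← W.final_id hθ hf, Kh_tp, W.bd_LL hbd (Good.Z W _ _ _ a), Zd, map_zero, add_zero]

lemma theta_add (W : WModel S Bi B) (hθ : IsTheta S Bi finv θ) (h l : H) (r : ℕ) : θ (h + l) r = θ h r + θ l r := by
  apply HCh_ext
  intro m a
  rw [LinearMap.add_apply, W.theta_eq hθ, W.theta_eq hθ, W.theta_eq hθ, LL_apply, LL_apply, LL_apply,
    map_add, map_add]

lemma theta_zero (W : WModel S Bi B) (hθ : IsTheta S Bi finv θ) (r : ℕ) : θ 0 r = 0 := by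
  have := W.theta_add hθ 0 0 r
  simpa using this

lemma theta_one (hθ : IsTheta S Bi finv θ) (hf : IsConvInverse S.f finv) (r : ℕ) : θ 1 r = LinearMap.id := by
  have hG : G3 S finv (1 ⊗ₜ (1 ⊗ₜ 1)) = 1 := by
    have := hf 1 1 1 1 _ _ SRep_one_one SRep_one_one
    have h1 := this.1
    simp [(S.f_normal 1).1] at h1
    rw [G3_tmul]
    simp [h1, S.ι_one]
  have hone : ∀ n, itComul k n (1 : H) = tp k (fun _ : Fin (n + 1) => (1 : H)) := by
    intro n
    induction n with
    | zero => rw [itComul_zero]; rfl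
    | succ n ih =>
      rw [itComul_succ, Bialgebra.comul_one, Algebra.TensorProduct.one_def, TensorProduct.map_tmul, ih]; rfl
  apply HCh_ext
  intro m a
  rw [hθ 1 r m a 1 (fun _ _ => 1) (by unfold SRep; rw [hone]; simp)]
  simp only [← G3_tmul, hG, hE_one, Bi.l_one, Bi.r_one, S.one_act]
  simp

end WModel
end ModelSec3

section ConstrSec

variable {k A H E M : Type} [CommRing k] [Ring A] [Algebra k A] [Ring H] [HopfAlgebra k H]
  [Ring E] [Algebra k E] [AddCommGroup M] [Module k M]

namespace Constr

variable (k A M) in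
def cpush (n : ℕ) : Qbar k A ⊗[k] HCh k A M n →ₗ[k] HCh k A M (n + 1) :=
  TensorProduct.map LinearMap.id (consE (Qbar k A) n).toLinearMap ∘ₗ
    (TensorProduct.leftComm k (Qbar k A) M (Tpow k (Qbar k A) n)).toLinearMap

lemma cpush_tmul (n : ℕ) (v : Qbar k A) (m : M) (w : Tpow k (Qbar k A) n) :
    cpush k A M n (v ⊗ₜ (m ⊗ₜ w)) = m ⊗ₜ consE (Qbar k A) n (v ⊗ₜ w) := rfl

/-- apply an endomorphism of `M` to the coefficient -/
def co (g : M →ₗ[k] M) (n : ℕ) : HCh k A M n →ₗ[k] HCh k A M n :=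
  TensorProduct.map g LinearMap.id

lemma co_tmul (g : M →ₗ[k] M) (n : ℕ) (m : M) (w : Tpow k (Qbar k A) n) :
    (co g n (m ⊗ₜ w) : HCh k A M n) = g m ⊗ₜ w := rfl

lemma cpush_co (g : M →ₗ[k] M) (n : ℕ) (v : Qbar k A) (x : HCh k A M n) :
    cpush k A M n (v ⊗ₜ co g n x) = co g (n + 1) (cpush k A M n (v ⊗ₜ x)) := by
  induction x using TensorProduct.induction_on with
  | zero => simp
  | tmul m w => rfl
  | add x y hx hy => rw [map_add, TensorProduct.tmul_add, map_add, hx, hy, TensorProduct.tmul_add,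
      map_add, map_add]

variable (k A E M) in
abbrev Y0 : Type := M × (∀ n : ℕ, E ⊗[k] HCh k A M n)

variable (k A E M) in
def Y : Type := Y0 k A E M

instance : AddCommGroup (Y k A E M) := inferInstanceAs (AddCommGroup (Y0 k A E M))
instance : Module k (Y k A E M) := inferInstanceAs (Module k (Y0 k A E M))

lemma Y_add_fst (x y : Y k A E M) : (x + y).1 = x.1 + y.1 := rfl
lemma Y_add_snd (x y : Y k A E M) (n : ℕ) : (x + y).2 n = x.2 n + y.2 n := rfl
lemma Y_smul_fst (c : k) (x : Y k A E M) : (c • x).1 = c • x.1 := rfl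
lemma Y_smul_snd (c : k) (x : Y k A E M) (n : ℕ) : (c • x).2 n = c • x.2 n := rfl

variable (k A E M) in
def inY : M →ₗ[k] Y k A E M := (LinearMap.inl k M _ : M →ₗ[k] Y0 k A E M)

variable (S : CrossedProduct k A H E) (Bi : Bimod k E M)

def pr : E →ₗ[k] A := (TensorProduct.rid k A).toLinearMap ∘ₗ
  TensorProduct.map LinearMap.id (Coalgebra.counit (R := k) (A := H)) ∘ₗ S.ι.symm.toLinearMap

lemma pr_aE (a : A) : pr S (aEh S a) = a := by
  simp [pr, aEh_apply, CrossedProduct.aE]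

def push (n : ℕ) : E ⊗[k] HCh k A M n →ₗ[k] HCh k A M (n + 1) :=
  cpush k A M n ∘ₗ TensorProduct.map (qbar k A ∘ₗ pr S) LinearMap.id

lemma push_tmul (n : ℕ) (e : E) (x : HCh k A M n) :
    push S n (e ⊗ₜ x) = cpush k A M n (qbar k A (pr S e) ⊗ₜ x) := rfl

def oneT (n : ℕ) : HCh k A M n →ₗ[k] E ⊗[k] HCh k A M n := TensorProduct.mk k E _ 1

def tY2 : ∀ n : ℕ, Y0 k A E M →ₗ[k] E ⊗[k] HCh k A M n
  | 0 => oneT 0 ∘ₗ (TensorProduct.mk k M (Tpow k (Qbar k A) 0)).flip (zeroE _ 1) ∘ₗ LinearMap.fst k _ _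
  | n + 1 => oneT (n + 1) ∘ₗ push S n ∘ₗ LinearMap.proj n ∘ₗ LinearMap.snd k _ _

def tY : Module.End k (Y k A E M) :=
  (LinearMap.prod 0 (LinearMap.pi (tY2 S)) : Y0 k A E M →ₗ[k] Y0 k A E M)

def cY2 (v : Qbar k A) : ∀ n : ℕ, Y0 k A E M →ₗ[k] E ⊗[k] HCh k A M n
  | 0 => 0
  | n + 1 => TensorProduct.map LinearMap.id (cpush k A M n ∘ₗ TensorProduct.mk k _ _ v) ∘ₗ
      LinearMap.proj n ∘ₗ LinearMap.snd k _ _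

def cY (v : Qbar k A) : Module.End k (Y k A E M) :=
  (LinearMap.prod 0 (LinearMap.pi (cY2 v)) : Y0 k A E M →ₗ[k] Y0 k A E M)

variable (A) in
def iY (e : E) : Module.End k (Y k A E M) :=
  (LinearMap.prodMap (Bi.l e) (LinearMap.pi (fun n =>
    TensorProduct.map (LinearMap.mulLeft k e) LinearMap.id ∘ₗ LinearMap.proj n)) :
      Y0 k A E M →ₗ[k] Y0 k A E M)

variable (A) in
def RY (e : E) : Module.End k (Y k A E M) :=
  (LinearMap.prodMap (Bi.r e) (LinearMap.pi (fun n =>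
    TensorProduct.map LinearMap.id (co (Bi.r e) n) ∘ₗ LinearMap.proj n)) :
      Y0 k A E M →ₗ[k] Y0 k A E M)

lemma Y_ext {x y : Y k A E M} (h1 : x.1 = y.1) (h2 : ∀ n, x.2 n = y.2 n) : x = y :=
  (Prod.ext h1 (funext h2) : (x : Y0 k A E M) = y)

lemma tY_fst (x : Y k A E M) : (tY S x).1 = 0 := rfl
lemma tY_zero (x : Y k A E M) : (tY S x).2 0 = (1 : E) ⊗ₜ (x.1 ⊗ₜ zeroE _ 1) := rfl
lemma tY_succ (x : Y k A E M) (n : ℕ) : (tY S x).2 (n + 1) = (1 : E) ⊗ₜ push S n (x.2 n) := rfl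
lemma cY_fst (v : Qbar k A) (x : Y k A E M) : (cY v x).1 = 0 := rfl
lemma cY_zero (v : Qbar k A) (x : Y k A E M) : (cY v x).2 0 = 0 := rfl
lemma cY_succ (v : Qbar k A) (x : Y k A E M) (n : ℕ) : (cY v x).2 (n + 1) =
  TensorProduct.map LinearMap.id (cpush k A M n ∘ₗ TensorProduct.mk k _ _ v) (x.2 n) := rfl
lemma iY_fst (e : E) (x : Y k A E M) : (iY A Bi e x).1 = Bi.l e x.1 := rfl
lemma iY_snd (e : E) (x : Y k A E M) (n : ℕ) : (iY A Bi e x).2 n =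
  TensorProduct.map (LinearMap.mulLeft k e) LinearMap.id (x.2 n) := rfl
lemma RY_fst (e : E) (x : Y k A E M) : (RY A Bi e x).1 = Bi.r e x.1 := rfl
lemma RY_snd (e : E) (x : Y k A E M) (n : ℕ) : (RY A Bi e x).2 n =
  TensorProduct.map LinearMap.id (co (Bi.r e) n) (x.2 n) := rfl

lemma push_co (g : M →ₗ[k] M) (n : ℕ) (x : E ⊗[k] HCh k A M n) :
    push S n (TensorProduct.map LinearMap.id (co g n) x) = co g (n + 1) (push S n x) := by
  induction x using TensorProduct.induction_on with
  | zero => simp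
  | tmul e w => rw [TensorProduct.map_tmul, push_tmul, cpush_co]; rfl
  | add x y hx hy => rw [map_add, map_add, hx, hy, map_add, map_add]

variable (A) in
def BB : Subalgebra k (Module.End k (Y k A E M)) := Subalgebra.centralizer k (Set.range (RY A Bi))

lemma mem_BB {b : Module.End k (Y k A E M)} :
    b ∈ BB A Bi ↔ ∀ e x, RY A Bi e (b x) = b (RY A Bi e x) := by
  rw [BB, Subalgebra.mem_centralizer_iff]
  constructor
  · intro h e x
    exact LinearMap.congr_fun (h _ ⟨e, rfl⟩) x
  · rintro h _ ⟨e, rfl⟩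
    exact LinearMap.ext (h e)

lemma tY_mem : tY S ∈ BB A Bi := by
  rw [mem_BB]
  intro e x
  apply Y_ext
  · rw [RY_fst, tY_fst, tY_fst, map_zero]
  · rintro (_ | n)
    · rw [RY_snd, tY_zero, tY_zero, RY_fst]; rfl
    · rw [RY_snd, tY_succ, tY_succ, RY_snd, push_co]; rfl

lemma cY_mem (v : Qbar k A) : cY v ∈ BB A Bi := by
  rw [mem_BB]
  intro e x
  apply Y_ext
  · rw [RY_fst, cY_fst, cY_fst, map_zero]
  · rintro (_ | n)
    · rw [RY_snd, cY_zero, cY_zero, map_zero]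
    · rw [RY_snd, cY_succ, cY_succ, RY_snd]
      generalize x.2 n = z
      induction z using TensorProduct.induction_on with
      | zero => simp only [map_zero]
      | tmul e w =>
        simp only [TensorProduct.map_tmul, LinearMap.comp_apply, TensorProduct.mk_apply, cpush_co]
      | add x y hx hy => simp only [map_add, hx, hy]

lemma iY_mem (e : E) : iY A Bi e ∈ BB A Bi := by
  rw [mem_BB]
  intro e' x
  apply Y_ext
  · rw [RY_fst, iY_fst, iY_fst, RY_fst]
    exact (LinearMap.congr_fun (Bi.lr_comm e e') x.1).symm
  · intro n
    rw [RY_snd, iY_snd, iY_snd, RY_snd, ← LinearMap.comp_apply, ← LinearMap.comp_apply,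
      ← TensorProduct.map_comp, ← TensorProduct.map_comp]
    rfl

lemma iY_add (e e' : E) : iY A Bi (e + e') = iY A Bi e + iY A Bi e' := by
  refine LinearMap.ext fun x => Y_ext ?_ fun n => ?_
  · rw [LinearMap.add_apply, Y_add_fst, iY_fst, iY_fst, iY_fst, map_add, LinearMap.add_apply]
  · rw [LinearMap.add_apply, Y_add_snd, iY_snd, iY_snd, iY_snd, ← LinearMap.add_apply,
      ← TensorProduct.map_add_left]
    congr 2
    exact LinearMap.ext fun y => add_mul e e' y

lemma iY_smul (c : k) (e : E) : iY A Bi (c • e) = c • iY A Bi e := by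
  refine LinearMap.ext fun x => Y_ext ?_ fun n => ?_
  · rw [LinearMap.smul_apply, Y_smul_fst, iY_fst, iY_fst, map_smul, LinearMap.smul_apply]
  · rw [LinearMap.smul_apply, Y_smul_snd, iY_snd, iY_snd, ← LinearMap.smul_apply,
      ← TensorProduct.map_smul_left]
    congr 2
    exact LinearMap.ext fun y => smul_mul_assoc c e y

lemma iY_one : iY A Bi 1 = 1 := by
  refine LinearMap.ext fun x => Y_ext ?_ fun n => ?_
  · rw [iY_fst, Bi.l_one]; rfl
  · rw [iY_snd, LinearMap.mulLeft_one, TensorProduct.map_id]; rfl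

lemma iY_mul (e e' : E) : iY A Bi (e * e') = iY A Bi e * iY A Bi e' := by
  refine LinearMap.ext fun x => Y_ext ?_ fun n => ?_
  · rw [iY_fst, Bi.l_mul]; rfl
  · change TensorProduct.map (LinearMap.mulLeft k (e * e')) LinearMap.id (x.2 n) =
      TensorProduct.map (LinearMap.mulLeft k e) LinearMap.id
        (TensorProduct.map (LinearMap.mulLeft k e') LinearMap.id (x.2 n))
    rw [← LinearMap.comp_apply, ← TensorProduct.map_comp, LinearMap.mulLeft_mul]
    rfl

variable (A) in
def iA : E →ₐ[k] BB A Bi := AlgHom.ofLinearMap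
  { toFun := fun e => (⟨iY A Bi e, iY_mem Bi e⟩ : BB A Bi)
    map_add' := fun e e' => Subtype.ext (iY_add Bi e e')
    map_smul' := fun c e => Subtype.ext (iY_smul Bi c e) }
  (Subtype.ext (iY_one Bi)) (fun e e' => Subtype.ext (iY_mul Bi e e'))

lemma cY_add (v v' : Qbar k A) : (cY (v + v') : Module.End k (Y k A E M)) = cY v + cY v' := by
  refine LinearMap.ext fun x => Y_ext ?_ ?_
  · rw [LinearMap.add_apply, Y_add_fst, cY_fst, cY_fst, cY_fst, add_zero]
  · rintro (_ | n)
    · rw [LinearMap.add_apply, Y_add_snd, cY_zero, cY_zero, cY_zero, add_zero]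
    · rw [LinearMap.add_apply, Y_add_snd, cY_succ, cY_succ, cY_succ, map_add, LinearMap.comp_add,
        TensorProduct.map_add_right, LinearMap.add_apply]

lemma cY_smul (c : k) (v : Qbar k A) : (cY (c • v) : Module.End k (Y k A E M)) = c • cY v := by
  refine LinearMap.ext fun x => Y_ext ?_ ?_
  · rw [LinearMap.smul_apply, Y_smul_fst, cY_fst, cY_fst, smul_zero]
  · rintro (_ | n)
    · rw [LinearMap.smul_apply, Y_smul_snd, cY_zero, cY_zero, smul_zero]
    · rw [LinearMap.smul_apply, Y_smul_snd, cY_succ, cY_succ, map_smul, LinearMap.comp_smul,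
        TensorProduct.map_smul_right, LinearMap.smul_apply]

def cA : Qbar k A →ₗ[k] BB A Bi where
  toFun v := ⟨cY v, cY_mem Bi v⟩
  map_add' v v' := Subtype.ext (cY_add v v')
  map_smul' c v := Subtype.ext (cY_smul c v)

def rd (n : ℕ) : E ⊗[k] HCh k A M n →ₗ[k] HCh k A M n :=
  TensorProduct.lift (LinearMap.mk₂ k (fun e x => co (Bi.r e) n x)
    (fun e e' x => by simp [co, TensorProduct.map_add_left])
    (fun c e x => by simp [co, TensorProduct.map_smul_left])
    (fun e x x' => by simp) (fun c e x => by simp))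

lemma rd_tmul (n : ℕ) (e : E) (x : HCh k A M n) : rd Bi n (e ⊗ₜ x) = co (Bi.r e) n x := rfl

lemma rd_mul (n : ℕ) (e : E) (z : E ⊗[k] HCh k A M n) :
    rd Bi n (TensorProduct.map (LinearMap.mulLeft k e) LinearMap.id z) =
      rd Bi n (TensorProduct.map LinearMap.id (co (Bi.r e) n) z) := by
  induction z using TensorProduct.induction_on with
  | zero => simp only [map_zero]
  | tmul e' w =>
    rw [TensorProduct.map_tmul, TensorProduct.map_tmul, rd_tmul, rd_tmul, LinearMap.mulLeft_apply,
      Bi.r_mul, co, co, co, LinearMap.id_apply, LinearMap.id_apply, ← LinearMap.comp_apply,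
      ← TensorProduct.map_comp]
    rfl
  | add x y hx hy => simp only [map_add, hx, hy]

def EvA (n : ℕ) : M →ₗ[k] BB A Bi →ₗ[k] HCh k A M n :=
  LinearMap.mk₂ k (fun m b => rd Bi n ((b.1 (inY k A E M m)).2 n))
    (fun m m' b => by rw [map_add, map_add, Y_add_snd, map_add])
    (fun c m b => by rw [map_smul, map_smul, Y_smul_snd, map_smul])
    (fun m b b' => by
      rw [Subalgebra.coe_add, LinearMap.add_apply, Y_add_snd, map_add])
    (fun c m b => by
      rw [Subalgebra.coe_smul, LinearMap.smul_apply, Y_smul_snd, map_smul])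

lemma EvA_apply (n : ℕ) (m : M) (b : BB A Bi) :
    EvA Bi n m b = rd Bi n ((b.1 (inY k A E M m)).2 n) := rfl

lemma word_eq (m : M) : ∀ {n : ℕ} (y : Fin n → A),
    ((Wd (⟨tY S, tY_mem S Bi⟩ : BB A Bi) (fun j => iA A Bi (aEh S (y j)))).1
      (inY k A E M m)).2 n = (1 : E) ⊗ₜ (m ⊗ₜ[k] tp k (fun j => qbar k A (y j)))
  | 0, y => rfl
  | n + 1, y => by
    have ih := word_eq m (fun j => y j.succ)
    rw [Wd_succ]
    set w := Wd (⟨tY S, tY_mem S Bi⟩ : BB A Bi) (fun j => iA A Bi (aEh S (y (Fin.succ j))))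
    change (tY S (iY A Bi (aEh S (y 0)) (w.1 (inY k A E M m)))).2 (n + 1) = _
    rw [tY_succ, iY_snd, ih, TensorProduct.map_tmul, push_tmul, LinearMap.mulLeft_apply, mul_one, pr_aE]
    rfl

def model : WModel S Bi (BB A Bi) where
  i := iA A Bi
  t := ⟨tY S, tY_mem S Bi⟩
  cons := cA Bi
  Ev := EvA Bi
  P1 n m y := by
    rw [EvA_apply, word_eq, rd_tmul, Bi.r_one, co, TensorProduct.map_id]; rfl
  P2 n m e b := by
    rw [EvA_apply, EvA_apply]
    change rd Bi n ((iY A Bi e (b.1 (inY k A E M m))).2 n) = _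
    rw [iY_snd, rd_mul, ← RY_snd, (mem_BB Bi).1 b.2]
    have : RY A Bi e (inY k A E M m) = inY k A E M (Bi.r e m) := by
      apply Y_ext
      · rfl
      · intro n; rw [RY_snd]; exact map_zero _
    rw [this]
  P3 n m e b := by
    rw [EvA_apply, EvA_apply]
    change rd Bi n ((b.1 (iY A Bi e (inY k A E M m))).2 n) = _
    have : iY A Bi e (inY k A E M m) = inY k A E M (Bi.l e m) := by
      apply Y_ext
      · rfl
      · intro n; rw [iY_snd]; exact map_zero _
    rw [this]
  P4 a := by
    apply Subtype.ext
    refine LinearMap.ext fun x => ?_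
    change tY S (iY A Bi (aEh S a) (tY S x)) = cY (qbar k A a) (tY S x)
    have key : ∀ n (z : HCh k A M n), (tY S x).2 n = (1 : E) ⊗ₜ z →
        (tY S (iY A Bi (aEh S a) (tY S x))).2 (n + 1) = (cY (qbar k A a) (tY S x)).2 (n + 1) := by
      intro n z hz
      rw [tY_succ, iY_snd, cY_succ, hz, TensorProduct.map_tmul, TensorProduct.map_tmul, push_tmul,
        LinearMap.mulLeft_apply, mul_one, pr_aE]
      rfl
    apply Y_ext
    · rfl
    · rintro (_ | _ | n)
      · rw [tY_zero, iY_fst, tY_fst, map_zero, TensorProduct.zero_tmul, TensorProduct.tmul_zero]; rfl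
      · exact key 0 _ (tY_zero S x)
      · exact key (n + 1) _ (tY_succ S x n)

end Constr
end ConstrSec

theorem exists_module_of_endo {H X : Type} [Ring H] [AddCommGroup X] (T : H → X →+ X)
    (h1 : T 1 = AddMonoidHom.id X) (hm : ∀ h l, T (h * l) = (T h).comp (T l))
    (ha : ∀ h l, T (h + l) = T h + T l) :
    ∃ inst : Module H X, ∀ (h : H) (x : X), (letI := inst; h • x) = T h x := by
  have h0 : T 0 = 0 := by simpa using ha 0 0
  let F : H →+* AddMonoid.End X :=
    { toFun := T, map_one' := h1, map_mul' := hm, map_zero' := h0, map_add' := ha }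
  exact ⟨Module.compHom X F, fun h x => rfl⟩

/-- **The `H`-module structure on Hochschild homology `H_*(A, M)`.**
Let `E = A #_f H` be a crossed product with convolution invertible cocycle, and let `M` be
an `E`-bimodule, regarded as an `A`-bimodule via `a ↦ a # 1`.  The maps
`θ^h_r(m ⊗ 𝐚) = (1 # h⁽³⁾) m (1 # h⁽¹⁾)⁻¹ ⊗ 𝐚^{h⁽²⁾}` form an endomorphism of the
normalized Hochschild chain complex `(M ⊗ Ā^*, b_*)`.  On Hochschild homology, the
endomorphisms induced by `θ^h ∘ θ^l` and by `θ^{hl}` coincide, and `θ^1` induces the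
identity; consequently `H_*(A, M)` carries a left `H`-module structure with
`h • [x] = [θ^h x]`. -/
theorem hochschild_homology_H_module
    (S : CrossedProduct k A H E) (Bi : Bimod k E M)
    (finv : H →ₗ[k] H →ₗ[k] A) (hfinv : IsConvInverse S.f finv)
    (bd : ∀ n : ℕ, HCh k A M (n + 1) →ₗ[k] HCh k A M n)
    (hbd : IsHochschildD k (Bi.l ∘ₗ S.aE) (Bi.r ∘ₗ S.aE) bd)
    (θ : H → ∀ r : ℕ, HCh k A M r →ₗ[k] HCh k A M r) (hθ : IsTheta S Bi finv θ) :
    -- `θ^h` is an endomorphism of the normalized Hochschild chain complex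
    (∀ (h : H) (r : ℕ), bd r ∘ₗ θ h (r + 1) = θ h r ∘ₗ bd r) ∧
    -- `θ^h ∘ θ^l` and `θ^{hl}` induce the same endomorphism of homology
    (∀ (h l : H) (x : HCh k A M 0),
        θ h 0 (θ l 0 x) - θ (h * l) 0 x ∈ LinearMap.range (bd 0)) ∧
    (∀ (h l : H) (n : ℕ) (x : HCh k A M (n + 1)), bd n x = 0 →
        θ h (n + 1) (θ l (n + 1) x) - θ (h * l) (n + 1) x ∈ LinearMap.range (bd (n + 1))) ∧
    -- `θ^1` induces the identity on homology
    (∀ x : HCh k A M 0, θ 1 0 x - x ∈ LinearMap.range (bd 0)) ∧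
    (∀ (n : ℕ) (x : HCh k A M (n + 1)), bd n x = 0 →
        θ 1 (n + 1) x - x ∈ LinearMap.range (bd (n + 1))) ∧
    -- consequently, `H_*(A, M)` is a left `H`-module via `h • [x] = [θ^h x]`
    (∃ inst0 : Module H (HCh k A M 0 ⧸ LinearMap.range (bd 0)),
      ∀ (h : H) (x : HCh k A M 0),
        (letI := inst0;
          h • (Submodule.Quotient.mk x : HCh k A M 0 ⧸ LinearMap.range (bd 0)) =
            Submodule.Quotient.mk (θ h 0 x))) ∧
    (∀ n : ℕ, ∃ instn : Module H (LinearMap.ker (bd n) ⧸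
        (LinearMap.range (bd (n + 1))).comap (LinearMap.ker (bd n)).subtype),
      ∀ (h : H) (x : HCh k A M (n + 1)) (hx : x ∈ LinearMap.ker (bd n))
        (hθx : θ h (n + 1) x ∈ LinearMap.ker (bd n)),
        (letI := instn;
          h • (Submodule.Quotient.mk ⟨x, hx⟩ : LinearMap.ker (bd n) ⧸
              (LinearMap.range (bd (n + 1))).comap (LinearMap.ker (bd n)).subtype) =
            Submodule.Quotient.mk ⟨θ h (n + 1) x, hθx⟩)) := by
  have W := Constr.model S Bi
  have c1 : ∀ (h : H) (r : ℕ), bd r ∘ₗ θ h (r + 1) = θ h r ∘ₗ bd r :=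
    fun h r => WModel.chain W hbd hθ hfinv h r
  have c1' : ∀ (h : H) (r : ℕ) x, bd r (θ h (r + 1) x) = θ h r (bd r x) :=
    fun h r x => LinearMap.congr_fun (c1 h r) x
  have c2 : ∀ (h l : H) (x : HCh k A M 0),
      θ h 0 (θ l 0 x) - θ (h * l) 0 x ∈ LinearMap.range (bd 0) := by
    intro h l x
    have := LinearMap.congr_fun (W.homotopy0 hbd hθ hfinv h l) x
    simp only [LinearMap.comp_apply, LinearMap.sub_apply] at this
    rw [← neg_sub, ← this]
    exact neg_mem ⟨_, rfl⟩
  have c3 : ∀ (h l : H) (n : ℕ) (x : HCh k A M (n + 1)), bd n x = 0 →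
      θ h (n + 1) (θ l (n + 1) x) - θ (h * l) (n + 1) x ∈ LinearMap.range (bd (n + 1)) := by
    intro h l n x hx
    have := LinearMap.congr_fun (W.homotopy hbd hθ hfinv h l n) x
    simp only [LinearMap.comp_apply, LinearMap.sub_apply, LinearMap.add_apply, hx, map_zero,
      add_zero] at this
    rw [← neg_sub, ← this]
    exact neg_mem ⟨_, rfl⟩
  have o : ∀ r x, θ 1 r x = x := fun r x => by
    rw [WModel.theta_one hθ hfinv r]; rfl
  have ad : ∀ h l r x, θ (h + l) r x = θ h r x + θ l r x := fun h l r x => by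
    rw [WModel.theta_add W hθ h l r]; rfl
  refine ⟨c1, c2, c3, fun x => ?_, fun n x _ => ?_, ?_, fun n => ?_⟩
  · rw [o, sub_self]; exact zero_mem _
  · rw [o, sub_self]; exact zero_mem _
  · have hr : ∀ h, LinearMap.range (bd 0) ≤ (LinearMap.range (bd 0)).comap (θ h 0) := by
      rintro h _ ⟨y, rfl⟩
      exact ⟨θ h 1 y, c1' h 0 y⟩
    obtain ⟨inst, hi⟩ := exists_module_of_endo
      (fun h => ((LinearMap.range (bd 0)).mapQ (LinearMap.range (bd 0)) (θ h 0) (hr h)).toAddMonoidHom)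
      (by
        refine AddMonoidHom.ext fun z => ?_
        obtain ⟨x, rfl⟩ := Submodule.Quotient.mk_surjective _ z
        exact congrArg _ (o 0 x))
      (by
        intro h l
        refine AddMonoidHom.ext fun z => ?_
        obtain ⟨x, rfl⟩ := Submodule.Quotient.mk_surjective _ z
        exact ((Submodule.Quotient.eq _).2 (c2 h l x)).symm)
      (by
        intro h l
        refine AddMonoidHom.ext fun z => ?_
        obtain ⟨x, rfl⟩ := Submodule.Quotient.mk_surjective _ z
        exact congrArg _ (ad h l 0 x))
    exact ⟨inst, fun h x => hi h _⟩
  · have hk : ∀ h, ∀ x ∈ LinearMap.ker (bd n), θ h (n + 1) x ∈ LinearMap.ker (bd n) := by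
      intro h x hx
      rw [LinearMap.mem_ker] at hx ⊢
      rw [c1', hx, map_zero]
    have hr : ∀ h, (LinearMap.range (bd (n + 1))).comap (LinearMap.ker (bd n)).subtype ≤
        ((LinearMap.range (bd (n + 1))).comap (LinearMap.ker (bd n)).subtype).comap
          ((θ h (n + 1)).restrict (hk h)) := by
      rintro h x ⟨y, hy⟩
      refine ⟨θ h (n + 2) y, ?_⟩
      rw [c1', hy]; rfl
    obtain ⟨inst, hi⟩ := exists_module_of_endo
      (fun h => (Submodule.mapQ _ _ ((θ h (n + 1)).restrict (hk h)) (hr h)).toAddMonoidHom)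
      (by
        refine AddMonoidHom.ext fun z => ?_
        obtain ⟨x, rfl⟩ := Submodule.Quotient.mk_surjective _ z
        exact congrArg Submodule.Quotient.mk (Subtype.ext (o (n + 1) x.1)))
      (by
        intro h l
        refine AddMonoidHom.ext fun z => ?_
        obtain ⟨x, rfl⟩ := Submodule.Quotient.mk_surjective _ z
        refine Eq.symm ((Submodule.Quotient.eq
          ((LinearMap.range (bd (n + 1))).comap (LinearMap.ker (bd n)).subtype)
          (x := ⟨θ h (n + 1) (θ l (n + 1) x.1), hk h _ (hk l _ x.2)⟩)
          (y := ⟨θ (h * l) (n + 1) x.1, hk (h * l) _ x.2⟩)).2 ?_)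
        exact c3 h l n x.1 x.2)
      (by
        intro h l
        refine AddMonoidHom.ext fun z => ?_
        obtain ⟨x, rfl⟩ := Submodule.Quotient.mk_surjective _ z
        exact congrArg Submodule.Quotient.mk (Subtype.ext (ad h l (n + 1) x.1)))
    exact ⟨inst, fun h x hx hθx => hi h _⟩

end Statement10

end HopfCrossed
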